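/- Let α > 0 be a non-integer, n ≥ 1, and V ∈ K_{2α}(ℝⁿ). Then for every integer j ≥ 0, every μ > 0, and all x ≠ y in ℝⁿ, the Laplace transform of the j-th Duhamel iterate equals the j-th iterated resolvent kernel: ∫₀^∞ e^{-μ t} K_j(t,x,y) dt = R_j(μ,x,y), the integral being absolutely convergent. -/

import Mathlib

open Real MeasureTheory Filter ENNReal
open scoped Classical

/-- The higher order Kato class `K_{2α}(ℝⁿ)`. -/
def katoClass (n : ℕ) (α : ℝ) (V : EuclideanSpace ℝ (Fin n) → ℝ) : Prop :=
  if 2 * α < n then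
    Tendsto (fun δ : ℝ => ⨆ x : EuclideanSpace ℝ (Fin n),
        ∫⁻ y in Metric.ball x δ, ENNReal.ofReal (‖x - y‖ ^ (2 * α - (n : ℝ)) * |V y|))
      (nhdsWithin 0 (Set.Ioi 0)) (nhds 0)
  else if 2 * α = (n : ℝ) then
    Tendsto (fun δ : ℝ => ⨆ x : EuclideanSpace ℝ (Fin n),
        ∫⁻ y in Metric.ball x δ, ENNReal.ofReal (Real.log (‖x - y‖ ^ (-(n : ℝ))) * |V y|))
      (nhdsWithin 0 (Set.Ioi 0)) (nhds 0)
  else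
    (⨆ x : EuclideanSpace ℝ (Fin n), ∫⁻ y in Metric.ball x 1, ENNReal.ofReal |V y|) < ⊤

/-- The free heat kernel `K₀(t,x) = (2π)^{-n} ∫_{ℝⁿ} e^{i x·ξ} e^{-t|ξ|^{2α}} dξ`
of the semigroup `e^{-t(-Δ)^α}`. -/
noncomputable def K0 (n : ℕ) (α : ℝ) (t : ℝ) (x : EuclideanSpace ℝ (Fin n)) : ℂ :=
  ((2 * Real.pi) ^ (-(n : ℝ)) : ℝ) •
    ∫ ξ : EuclideanSpace ℝ (Fin n),
      Complex.exp (Complex.I * ((inner ℝ x ξ : ℝ) : ℂ)) *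
        Complex.exp (-(t : ℂ) * ((‖ξ‖ ^ (2 * α) : ℝ) : ℂ))

/-- `I(t,x) = min(t·|x|^{-(n+2α)}, t^{-n/(2α)})`  (with the convention that at `x = 0` only the
second, finite, term is kept, since `|0|^{-(n+2α)} = +∞`). -/
noncomputable def Ifun (n : ℕ) (α : ℝ) (t : ℝ) (x : EuclideanSpace ℝ (Fin n)) : ℝ :=
  if x = 0 then t ^ (-(n : ℝ) / (2 * α))
  else min (t * ‖x‖ ^ (-((n : ℝ) + 2 * α))) (t ^ (-(n : ℝ) / (2 * α)))

/-- The comparison kernel `J(t,x)`. -/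
noncomputable def Jfun (n : ℕ) (α : ℝ) (t : ℝ) (x : EuclideanSpace ℝ (Fin n)) : ℝ :=
  if 2 * α < n then min (‖x‖ ^ (2 * α - (n : ℝ))) (t ^ 2 * ‖x‖ ^ (-(n : ℝ) - 2 * α))
  else if 2 * α = (n : ℝ) then
    min (max 1 (Real.log (t * ‖x‖ ^ (-(n : ℝ))))) (t ^ 2 * ‖x‖ ^ (-2 * (n : ℝ)))
  else min (t ^ (1 - (n : ℝ) / (2 * α))) (t ^ 2 * ‖x‖ ^ (-(n : ℝ) - 2 * α))

/-- `K_V(t) = sup_{x∈ℝⁿ} ∫_{ℝⁿ} J(t, x-y) |V(y)| dy`. -/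
noncomputable def KV (n : ℕ) (α : ℝ) (V : EuclideanSpace ℝ (Fin n) → ℝ) (t : ℝ) : ℝ≥0∞ :=
  ⨆ x : EuclideanSpace ℝ (Fin n),
    ∫⁻ y, ENNReal.ofReal (Jfun n α t (x - y) * |V y|)

/-- The Duhamel iterates: `K₀(t,x,y) = K₀(t,x-y)` and
`K_j(t,x,y) = ∫_{ℝⁿ} ∫₀^t K_{j-1}(t-s,x,z) V(z) K₀(s,z,y) ds dz` for `j ≥ 1`. -/
noncomputable def Kiter (n : ℕ) (α : ℝ) (V : EuclideanSpace ℝ (Fin n) → ℝ) :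
    ℕ → ℝ → EuclideanSpace ℝ (Fin n) → EuclideanSpace ℝ (Fin n) → ℂ
  | 0, t, x, y => K0 n α t (x - y)
  | (j + 1), t, x, y =>
      ∫ z : EuclideanSpace ℝ (Fin n),
        ∫ s in Set.Ioo (0 : ℝ) t, Kiter n α V j (t - s) x z * (V z : ℂ) * K0 n α s (z - y)


/-- `R₀(μ,x,y) = ∫₀^∞ e^{-μt} K₀(t,x-y) dt`, the free resolvent kernel. -/
noncomputable def R0 (n : ℕ) (α : ℝ) (μ : ℝ) (x y : EuclideanSpace ℝ (Fin n)) : ℂ :=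
  ∫ t in Set.Ioi (0 : ℝ), (Real.exp (-μ * t) : ℂ) * K0 n α t (x - y)

/-- The iterated resolvent kernels:
`R_j(μ,x,y) = ∫_{ℝⁿ} R_{j-1}(μ,x,z) V(z) R₀(μ,z,y) dz` for `j ≥ 1`. -/
noncomputable def Riter (n : ℕ) (α : ℝ) (V : EuclideanSpace ℝ (Fin n) → ℝ) :
    ℕ → ℝ → EuclideanSpace ℝ (Fin n) → EuclideanSpace ℝ (Fin n) → ℂ
  | 0, μ, x, y => R0 n α μ x y
  | (j + 1), μ, x, y =>
      ∫ z : EuclideanSpace ℝ (Fin n), Riter n α V j μ x z * (V z : ℂ) * R0 n α μ z y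

/-!
Formally the identity is the convolution theorem applied under the `dz`-integral, so the content is
absolute convergence. Comparing `e^{-t|ξ|^{2α}}` with its iterated forward differences along a
suitable shift gives `|K₀(t,x)| ≤ C min(t |x|^{-(n+2α)}, t^{-n/(2α)})` for every `α > 0`, so the
Laplace transform of `|K₀|` is at most a multiple of a radial decreasing majorant `g(|x|)`. The
tail of `g` is a power of order `-(n+2α)` and its singularity at the origin is the Kato weight, so
`∫ g(|x-z|) |V(z)| dz` is bounded uniformly in `x`. Moreover `g` satisfies the 3G inequality
`g(|x-z|) g(|z-y|) ≤ C g(|x-y|) (g(|x-z|) + g(|z-y|))`, hence by induction on `j` the Laplace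
transform of `|K_j(·,x,y)|` is at most a multiple of `g(|x-y|)`, which is finite for `x ≠ y`.

The Kato condition, a bound on lower integrals, does not force `V` to be measurable. When it is not,
for `j ≥ 1` both sides are Bochner integrals of non-measurable functions, which are `0` by
convention. To see this one needs that the factors multiplying `V` do not vanish almost everywhere:
they are holomorphic in time or in the spectral parameter, and not identically zero.
-/

section ForwardDifferences

open Metric

theorem norm_iterate_fwdDiff_le {M G : Type*} [AddCommMonoid M] [SeminormedAddCommGroup G]
    (h : M) {f : M → G} {x : M} {B : ℝ} {m : ℕ} (hf : ∀ k ≤ m, ‖f (x + k • h)‖ ≤ B) :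
    ‖(fwdDiff h)^[m] f x‖ ≤ 2 ^ m * B := by
  induction m generalizing f B with
  | zero => simpa using hf 0 le_rfl
  | succ m ih =>
    have hdiff : ∀ k ≤ m, ‖fwdDiff h f (x + k • h)‖ ≤ 2 * B := fun k hk => by
      have hk₀ := hf k (by omega)
      have hk₁ := hf (k + 1) (by omega)
      rw [succ_nsmul, ← add_assoc] at hk₁
      exact (norm_sub_le _ _).trans (by linarith)
    calc ‖(fwdDiff h)^[m] (fwdDiff h f) x‖ ≤ 2 ^ m * (2 * B) := ih hdiff
      _ = 2 ^ (m + 1) * B := by ring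

theorem iterate_fwdDiff_eq_of_forall_nsmul {M M' G : Type*} [AddCommMonoid M] [AddCommMonoid M']
    [AddCommGroup G] {h : M} {h' : M'} {f : M → G} {g : M' → G} {x : M} {x' : M'} (m : ℕ)
    (hfg : ∀ k : ℕ, f (x + k • h) = g (x' + k • h')) :
    (fwdDiff h)^[m] f x = (fwdDiff h')^[m] g x' := by
  simp only [fwdDiff_iter_eq_sum_shift, hfg]

theorem iterate_fwdDiff_sub_const {M G : Type*} [AddCommMonoid M] [AddCommGroup G] (h : M)
    {m : ℕ} (hm : m ≠ 0) (f : M → G) (c : G) :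
    (fwdDiff h)^[m] (fun x => f x - c) = (fwdDiff h)^[m] f := by
  obtain ⟨k, rfl⟩ := Nat.exists_eq_succ_of_ne_zero hm
  have hone : fwdDiff h (fun x => f x - c) = fwdDiff h f := by ext; simp [fwdDiff]
  rw [Function.iterate_succ_apply, hone, ← Function.iterate_succ_apply]

theorem integrable_iterate_fwdDiff {M G : Type*} [AddCommGroup M] [MeasurableSpace M]
    [MeasurableAdd M] {μ : Measure M} [μ.IsAddRightInvariant] [NormedAddCommGroup G] (h : M)
    (m : ℕ) {f : M → G} (hf : Integrable f μ) : Integrable ((fwdDiff h)^[m] f) μ := by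
  induction m generalizing f with
  | zero => exact hf
  | succ _ ih => exact ih ((hf.comp_add_right h).sub hf)

-- Each difference costs one application of the Schwarz lemma on balls of radius `ρ`.
theorem norm_iterate_fwdDiff_le_of_differentiableOn {E : Type*} [NormedAddCommGroup E]
    [NormedSpace ℂ E] {ρ : ℝ} {h : ℂ} (hh : ‖h‖ < ρ) {m : ℕ} {F : ℂ → E} {M : ℝ} {c : ℂ}
    (hF : DifferentiableOn ℂ F (ball c ((m + 1) * ρ)))
    (hM : ∀ z ∈ ball c ((m + 1) * ρ), ‖F z‖ ≤ M) :
    ‖(fwdDiff h)^[m] F c‖ ≤ M * (2 * ‖h‖ / ρ) ^ m := by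
  have hρ : 0 < ρ := (norm_nonneg h).trans_lt hh
  induction m generalizing F M with
  | zero => simpa using hM c (by simpa using hρ)
  | succ m ih =>
    push_cast at hF hM
    have hsub : ∀ z ∈ ball c ((m + 1) * ρ), ball z ρ ⊆ ball c ((m + 1 + 1) * ρ) :=
      fun z hz => ball_subset_ball' (by linarith [mem_ball.1 hz])
    have hmem : ∀ z, z + h ∈ ball z ρ := fun z => by simpa [mem_ball, dist_eq_norm] using hh
    have hdiff : DifferentiableOn ℂ (fwdDiff h F) (ball c ((m + 1) * ρ)) :=
      (hF.comp (by fun_prop) fun z hz => hsub z hz (hmem z)).sub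
        (hF.mono fun z hz => hsub z hz (mem_ball_self hρ))
    have hbound : ∀ z ∈ ball c ((m + 1) * ρ), ‖fwdDiff h F z‖ ≤ M * (2 * ‖h‖ / ρ) := by
      intro z hz
      have hmaps : Set.MapsTo F (ball z ρ) (closedBall (F z) (2 * M)) := fun w hw => by
        rw [mem_closedBall, dist_eq_norm]
        linarith [norm_sub_le (F w) (F z), hM w (hsub z hz hw),
          hM z (hsub z hz (mem_ball_self hρ))]
      calc ‖fwdDiff h F z‖ = dist (F (z + h)) (F z) := (dist_eq_norm _ _).symm
        _ ≤ 2 * M / ρ * dist (z + h) z :=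
          Complex.dist_le_div_mul_dist_of_mapsTo_ball (hF.mono (hsub z hz)) hmaps (hmem z)
        _ = M * (2 * ‖h‖ / ρ) := by rw [dist_eq_norm, add_sub_cancel_left]; ring
    calc ‖(fwdDiff h)^[m] (fwdDiff h F) c‖ ≤ M * (2 * ‖h‖ / ρ) * (2 * ‖h‖ / ρ) ^ m :=
          ih hdiff hbound
      _ = M * (2 * ‖h‖ / ρ) ^ (m + 1) := by ring

end ForwardDifferences

section FourierIntegral

open scoped FourierTransform

variable {V E : Type*} [NormedAddCommGroup V] [InnerProductSpace ℝ V] [FiniteDimensional ℝ V]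
  [MeasurableSpace V] [BorelSpace V] [NormedAddCommGroup E] [NormedSpace ℂ E]

theorem norm_fourier_le_integral_norm (f : V → E) (w : V) : ‖𝓕 f w‖ ≤ ∫ v, ‖f v‖ :=
  VectorFourier.norm_fourierIntegral_le_integral_norm _ _ _ f w

theorem norm_fourier_le_norm_fourier_fwdDiff {f : V → E} (hf : Integrable f) {w : V}
    (hw : w ≠ 0) : ‖𝓕 f w‖ ≤ ‖𝓕 (fwdDiff ((1 / (2 * ‖w‖ ^ 2) : ℝ) • w) f) w‖ := by
  have hhalf : 𝓕 f w = -(1 / 2 : ℂ) • 𝓕 (fwdDiff ((1 / (2 * ‖w‖ ^ 2) : ℝ) • w) f) w := by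
    rw [Real.fourier_eq, fourierIntegral_eq_half_sub_half_period_translate hw hf, neg_smul,
      ← smul_neg, Real.fourier_eq, ← integral_neg]
    simp only [fwdDiff, ← smul_neg, neg_sub]
  calc ‖𝓕 f w‖ = 1 / 2 * ‖𝓕 (fwdDiff ((1 / (2 * ‖w‖ ^ 2) : ℝ) • w) f) w‖ := by
        rw [hhalf, norm_smul, norm_neg]; norm_num
    _ ≤ _ := by linarith [norm_nonneg (𝓕 (fwdDiff ((1 / (2 * ‖w‖ ^ 2) : ℝ) • w) f) w)]

theorem norm_fourier_le_integral_norm_iterate_fwdDiff {f : V → E} (hf : Integrable f) {w : V}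
    (hw : w ≠ 0) (m : ℕ) :
    ‖𝓕 f w‖ ≤ ∫ v, ‖(fwdDiff ((1 / (2 * ‖w‖ ^ 2) : ℝ) • w))^[m] f v‖ := by
  suffices ‖𝓕 f w‖ ≤ ‖𝓕 ((fwdDiff ((1 / (2 * ‖w‖ ^ 2) : ℝ) • w))^[m] f) w‖ from
    this.trans (norm_fourier_le_integral_norm _ w)
  induction m with
  | zero => rfl
  | succ m ih =>
    rw [Function.iterate_succ_apply']
    exact ih.trans (norm_fourier_le_norm_fourier_fwdDiff (integrable_iterate_fwdDiff _ m hf) hw)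

end FourierIntegral

theorem norm_cexp_sub_one_le_two_mul_norm {w : ℂ} (hw : w.re ≤ 0) :
    ‖Complex.exp w - 1‖ ≤ 2 * ‖w‖ := by
  rcases le_or_gt ‖w‖ 1 with hle | hgt
  · exact Complex.norm_exp_sub_one_le hle
  · have hexp : ‖Complex.exp w‖ ≤ 1 := by rw [Complex.norm_exp]; exact Real.exp_le_one_iff.2 hw
    calc ‖Complex.exp w - 1‖ ≤ ‖Complex.exp w‖ + ‖(1 : ℂ)‖ := norm_sub_le _ _
      _ ≤ 2 * ‖w‖ := by rw [norm_one]; linarith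

/-- The Fourier symbol `e^{-t|ξ|^{2α}}` of the free semigroup, at complex time `t`. -/
noncomputable def heatSymbol {E : Type*} [Norm E] (α : ℝ) (t : ℂ) (ξ : E) : ℂ :=
  Complex.exp (-t * ((‖ξ‖ ^ (2 * α) : ℝ) : ℂ))

section SymbolDifferences

variable {E : Type*} [NormedAddCommGroup E]

theorem norm_heatSymbol (α : ℝ) (t : ℂ) (ξ : E) :
    ‖heatSymbol α t ξ‖ = Real.exp (-t.re * ‖ξ‖ ^ (2 * α)) := by
  rw [heatSymbol, Complex.norm_exp, Complex.re_mul_ofReal, Complex.neg_re]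

theorem continuous_heatSymbol {α : ℝ} (hα : 0 ≤ α) :
    Continuous (fun p : ℂ × E => heatSymbol α p.1 p.2) := by
  unfold heatSymbol
  fun_prop (disch := positivity)

theorem norm_heatSymbol_sub_one_le {α : ℝ} {t : ℂ} (ht : 0 ≤ t.re) (ξ : E) :
    ‖heatSymbol α t ξ - 1‖ ≤ 2 * (‖t‖ * ‖ξ‖ ^ (2 * α)) := by
  have hξ : 0 ≤ ‖ξ‖ ^ (2 * α) := by positivity
  refine (norm_cexp_sub_one_le_two_mul_norm ?_).trans_eq ?_
  · rw [Complex.re_mul_ofReal, Complex.neg_re]; nlinarith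
  · rw [norm_mul, norm_neg, Complex.norm_real, Real.norm_of_nonneg hξ]

theorem norm_iterate_fwdDiff_heatSymbol_le_of_norm_le [NormedSpace ℝ E] {α : ℝ} (hα : 0 ≤ α)
    {m : ℕ} (hm : m ≠ 0) {κ : ℝ} {t : ℂ} (ht : 0 ≤ t.re) {h ξ : E} (hξ : ‖ξ‖ ≤ κ * ‖h‖) :
    ‖(fwdDiff h)^[m] (heatSymbol α t) ξ‖ ≤
      2 ^ m * (2 * (‖t‖ * ((κ + m) * ‖h‖) ^ (2 * α))) := by
  rw [← iterate_fwdDiff_sub_const h hm _ 1]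
  refine norm_iterate_fwdDiff_le h fun k hk => (norm_heatSymbol_sub_one_le ht _).trans ?_
  gcongr
  have hk' : (k : ℝ) * ‖h‖ ≤ m * ‖h‖ := by gcongr
  calc ‖ξ + k • h‖ ≤ ‖ξ‖ + k * ‖h‖ :=
        (norm_add_le _ _).trans (by gcongr; exact norm_nsmul_le)
    _ ≤ (κ + m) * ‖h‖ := by linarith

variable [InnerProductSpace ℝ E]

/-- The quadratic polynomial in `ζ` extending `s ↦ ‖ξ + s h‖² / ‖ξ‖²` from real to complex `ζ`. -/
noncomputable def lineNormSqRatio (h ξ : E) (ζ : ℂ) : ℂ :=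
  1 + 2 * ζ * ((inner ℝ ξ h / ‖ξ‖ ^ 2 : ℝ) : ℂ) + ζ ^ 2 * ((‖h‖ ^ 2 / ‖ξ‖ ^ 2 : ℝ) : ℂ)

theorem differentiable_lineNormSqRatio (h ξ : E) : Differentiable ℂ (lineNormSqRatio h ξ) := by
  unfold lineNormSqRatio; fun_prop

theorem lineNormSqRatio_natCast (h : E) {ξ : E} (hξ : ξ ≠ 0) (s : ℕ) :
    lineNormSqRatio h ξ s = (((‖ξ + s • h‖ / ‖ξ‖) ^ 2 : ℝ) : ℂ) := by
  have hξ' : (‖ξ‖ : ℂ) ≠ 0 := by exact_mod_cast norm_ne_zero_iff.2 hξ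
  rw [lineNormSqRatio, div_pow, ← Nat.cast_smul_eq_nsmul ℝ, norm_add_sq_real, inner_smul_right,
    norm_smul, Real.norm_natCast]
  push_cast
  field_simp

theorem norm_lineNormSqRatio_sub_one_le {h ξ : E} {ζ : ℂ} (hξ : ξ ≠ 0) (hζ : ‖ζ‖ * ‖h‖ ≤ ‖ξ‖) :
    ‖lineNormSqRatio h ξ ζ - 1‖ ≤ 3 * (‖ζ‖ * ‖h‖ / ‖ξ‖) := by
  have hξ' : 0 < ‖ξ‖ := norm_pos_iff.2 hξ
  set q := ‖ζ‖ * ‖h‖ / ‖ξ‖ with hq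
  have hq₁ : q ≤ 1 := (div_le_one hξ').2 hζ
  have hlinear : ‖2 * ζ * ((inner ℝ ξ h / ‖ξ‖ ^ 2 : ℝ) : ℂ)‖ ≤ 2 * q := by
    have hinner : |inner ℝ ξ h| ≤ ‖ξ‖ * ‖h‖ := abs_real_inner_le_norm ξ h
    rw [norm_mul, norm_mul, Complex.norm_real, Complex.norm_two, Real.norm_eq_abs, abs_div,
      abs_of_pos (by positivity : 0 < ‖ξ‖ ^ 2), mul_assoc]
    gcongr
    calc ‖ζ‖ * (|inner ℝ ξ h| / ‖ξ‖ ^ 2) ≤ ‖ζ‖ * (‖ξ‖ * ‖h‖ / ‖ξ‖ ^ 2) := by gcongr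
      _ = q := by rw [hq]; field_simp
  have hquadratic : ‖ζ ^ 2 * ((‖h‖ ^ 2 / ‖ξ‖ ^ 2 : ℝ) : ℂ)‖ ≤ q := by
    rw [norm_mul, norm_pow, Complex.norm_real, Real.norm_of_nonneg (by positivity)]
    calc ‖ζ‖ ^ 2 * (‖h‖ ^ 2 / ‖ξ‖ ^ 2) = q ^ 2 := by rw [hq]; ring
      _ ≤ q := by nlinarith [show 0 ≤ q by positivity]
  calc ‖lineNormSqRatio h ξ ζ - 1‖ ≤ 2 * q + q := by
        rw [lineNormSqRatio, add_assoc, add_sub_cancel_left]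
        exact (norm_add_le _ _).trans (add_le_add hlinear hquadratic)
    _ = 3 * q := by ring

/-- The holomorphic extension of `s ↦ e^{-t|ξ + s h|^{2α}}` to complex `ζ` near `0`. -/
noncomputable def heatSymbolLine (α : ℝ) (t : ℂ) (h ξ : E) (ζ : ℂ) : ℂ :=
  Complex.exp (-t * (((‖ξ‖ ^ (2 * α) : ℝ) : ℂ) * lineNormSqRatio h ξ ζ ^ (α : ℂ)))

theorem heatSymbolLine_natCast (α : ℝ) (t : ℂ) (h : E) {ξ : E} (hξ : ξ ≠ 0) (s : ℕ) :
    heatSymbolLine α t h ξ s = heatSymbol α t (ξ + s • h) := by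
  have hξ' : 0 < ‖ξ‖ := norm_pos_iff.2 hξ
  have hpow : ‖ξ‖ ^ (2 * α) * ((‖ξ + s • h‖ / ‖ξ‖) ^ 2) ^ α = ‖ξ + s • h‖ ^ (2 * α) := by
    rw [← Real.rpow_natCast_mul (by positivity), Nat.cast_ofNat,
      Real.div_rpow (norm_nonneg _) hξ'.le, mul_div_cancel₀ _ (by positivity)]
  rw [heatSymbolLine, lineNormSqRatio_natCast h hξ, ← Complex.ofReal_cpow (by positivity),
    ← Complex.ofReal_mul, hpow, heatSymbol]

theorem differentiableAt_heatSymbolLine (α : ℝ) (t : ℂ) {h ξ : E} {ζ : ℂ}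
    (hζ : ‖lineNormSqRatio h ξ ζ - 1‖ < 1) : DifferentiableAt ℂ (heatSymbolLine α t h ξ) ζ := by
  have hslit : lineNormSqRatio h ξ ζ ∈ Complex.slitPlane := by
    have hre := (abs_lt.1 ((Complex.abs_re_le_norm _).trans_lt hζ)).1
    rw [Complex.sub_re, Complex.one_re] at hre
    exact Or.inl (by linarith)
  have hcpow : DifferentiableAt ℂ (fun z => lineNormSqRatio h ξ z ^ (α : ℂ)) ζ :=
    (differentiable_lineNormSqRatio h ξ ζ).cpow_const hslit
  unfold heatSymbolLine
  fun_prop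

theorem norm_heatSymbolLine_sub_one_le {α : ℝ} {t : ℂ} (ht : ‖t‖ ≤ 2 * t.re) {h ξ : E} {ζ : ℂ}
    (hζ : ‖lineNormSqRatio h ξ ζ ^ (α : ℂ) - 1‖ ≤ 1 / 2) :
    ‖heatSymbolLine α t h ξ ζ - 1‖ ≤ 3 * (‖t‖ * ‖ξ‖ ^ (2 * α)) := by
  set u := lineNormSqRatio h ξ ζ ^ (α : ℂ)
  have hp : 0 ≤ ‖ξ‖ ^ (2 * α) := by positivity
  have hu : ‖u‖ ≤ 3 / 2 := by
    have hsum := norm_add_le (u - 1) 1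
    rw [sub_add_cancel, norm_one] at hsum
    linarith
  have hre : 0 ≤ (t * u).re := by
    have hpert : ‖t * (u - 1)‖ ≤ ‖t‖ * (1 / 2) := by rw [norm_mul]; gcongr
    have hlower := (abs_le.1 ((Complex.abs_re_le_norm _).trans hpert)).1
    rw [show t * u = t + t * (u - 1) by ring, Complex.add_re]
    linarith
  have hexponent : (-t * (((‖ξ‖ ^ (2 * α) : ℝ) : ℂ) * u)).re ≤ 0 := by
    rw [show -t * (((‖ξ‖ ^ (2 * α) : ℝ) : ℂ) * u) = -((t * u) * ((‖ξ‖ ^ (2 * α) : ℝ) : ℂ)) by ring,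
      Complex.neg_re, Complex.re_mul_ofReal]
    nlinarith
  calc ‖heatSymbolLine α t h ξ ζ - 1‖ ≤ 2 * (‖t‖ * (‖ξ‖ ^ (2 * α) * ‖u‖)) := by
        refine (norm_cexp_sub_one_le_two_mul_norm hexponent).trans_eq ?_
        rw [norm_mul, norm_neg, norm_mul, Complex.norm_real, Real.norm_of_nonneg hp]
    _ ≤ 2 * (‖t‖ * (‖ξ‖ ^ (2 * α) * (3 / 2))) := by gcongr
    _ = 3 * (‖t‖ * ‖ξ‖ ^ (2 * α)) := by ring

theorem exists_forall_norm_cpow_sub_one_le (a : ℂ) :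
    ∃ δ : ℝ, 0 < δ ∧ δ ≤ 1 ∧ ∀ u : ℂ, ‖u - 1‖ < δ → ‖u ^ a - 1‖ ≤ 1 / 2 := by
  have hcont : ContinuousAt (fun u : ℂ => u ^ a) 1 :=
    continuousAt_cpow_const (by simp [Complex.slitPlane])
  obtain ⟨δ, hδ, hclose⟩ := Metric.continuousAt_iff.1 hcont (1 / 2) (by norm_num)
  refine ⟨min δ 1, lt_min hδ one_pos, min_le_right _ _, fun u hu => ?_⟩
  have hdist := hclose (x := u) (by rw [dist_eq_norm]; exact hu.trans_le (min_le_left _ _))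
  simpa [dist_eq_norm] using hdist.le

theorem exists_norm_iterate_fwdDiff_heatSymbol_le_of_lt_norm (α : ℝ) {m : ℕ} (hm : m ≠ 0) :
    ∃ κ C : ℝ, 1 ≤ κ ∧ 0 ≤ C ∧ ∀ t : ℂ, ‖t‖ ≤ 2 * t.re → ∀ h ξ : E, h ≠ 0 → κ * ‖h‖ < ‖ξ‖ →
      ‖(fwdDiff h)^[m] (heatSymbol α t) ξ‖ ≤
        C * (‖t‖ * ‖ξ‖ ^ (2 * α)) * (‖h‖ / ‖ξ‖) ^ m := by
  obtain ⟨δ, hδ, hδ₁, hcpow⟩ := exists_forall_norm_cpow_sub_one_le (α : ℂ)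
  set κ : ℝ := 3 * (m + 1) / δ with hκ
  have hκ₁ : 1 ≤ κ := by rw [hκ, one_le_div hδ]; linarith [(Nat.cast_nonneg m : (0 : ℝ) ≤ m)]
  refine ⟨κ, 3 * (2 * κ) ^ m, hκ₁, by positivity, fun t ht h ξ hh hfar => ?_⟩
  have hh' : 0 < ‖h‖ := norm_pos_iff.2 hh
  have hξ' : 0 < ‖ξ‖ := lt_of_le_of_lt (by positivity) hfar
  have hξ : ξ ≠ 0 := norm_pos_iff.1 hξ'
  -- On the ball of radius `δ‖ξ‖ / (3‖h‖)` the quadratic polynomial stays within `δ` of `1`.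
  set ρ : ℝ := ‖ξ‖ / (κ * ‖h‖) with hρ
  have hclose : ∀ ζ ∈ Metric.ball (0 : ℂ) ((m + 1) * ρ), ‖lineNormSqRatio h ξ ζ - 1‖ < δ := by
    intro ζ hζ
    have hζ' : ‖ζ‖ * ‖h‖ / ‖ξ‖ < δ / 3 := by
      rw [mem_ball_zero_iff, show (m + 1) * ρ = δ / 3 * (‖ξ‖ / ‖h‖) by rw [hρ, hκ]; field_simp,
        ← mul_div_assoc, lt_div_iff₀ hh'] at hζ
      rwa [div_lt_iff₀ hξ']
    have hle : ‖ζ‖ * ‖h‖ ≤ ‖ξ‖ := (div_le_one hξ').1 (by linarith)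
    linarith [norm_lineNormSqRatio_sub_one_le hξ hle]
  have hone : ‖(1 : ℂ)‖ < ρ := by rw [norm_one, hρ, one_lt_div (by positivity)]; exact hfar
  calc ‖(fwdDiff h)^[m] (heatSymbol α t) ξ‖
      = ‖(fwdDiff (1 : ℂ))^[m] (fun ζ => heatSymbolLine α t h ξ ζ - 1) 0‖ := by
        rw [iterate_fwdDiff_sub_const _ hm,
          iterate_fwdDiff_eq_of_forall_nsmul (g := heatSymbolLine α t h ξ) m fun k => by
            rw [zero_add, nsmul_one, heatSymbolLine_natCast α t h hξ]]
    _ ≤ 3 * (‖t‖ * ‖ξ‖ ^ (2 * α)) * (2 * ‖(1 : ℂ)‖ / ρ) ^ m :=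
        norm_iterate_fwdDiff_le_of_differentiableOn hone
          (fun ζ hζ => ((differentiableAt_heatSymbolLine α t
            ((hclose ζ hζ).trans_le hδ₁)).sub_const 1).differentiableWithinAt)
          fun ζ hζ => norm_heatSymbolLine_sub_one_le ht (hcpow _ (hclose ζ hζ))
    _ = 3 * (2 * κ) ^ m * (‖t‖ * ‖ξ‖ ^ (2 * α)) * (‖h‖ / ‖ξ‖) ^ m := by
        rw [show 2 * ‖(1 : ℂ)‖ / ρ = 2 * κ * (‖h‖ / ‖ξ‖) by rw [hρ, norm_one]; field_simp, mul_pow]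
        ring

theorem rpow_neg_le_mul_rpow_neg {a c s r : ℝ} (ha : 0 < a) (hc : 0 < c) (hr : 0 ≤ r)
    (has : a ≤ c * s) : s ^ (-r) ≤ c ^ r * a ^ (-r) := by
  have hle : c⁻¹ * a ≤ s := by rwa [inv_mul_le_iff₀ hc]
  calc s ^ (-r) ≤ (c⁻¹ * a) ^ (-r) :=
        Real.rpow_le_rpow_of_nonpos (by positivity) hle (neg_nonpos.2 hr)
    _ = c ^ r * a ^ (-r) := by
        rw [Real.mul_rpow (by positivity) ha.le, Real.inv_rpow hc.le, Real.rpow_neg hc.le, inv_inv]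

theorem exists_norm_iterate_fwdDiff_heatSymbol_le {α : ℝ} (hα : 0 < α) {m : ℕ}
    (hm : 2 * α < m) : ∃ C : ℝ, 0 ≤ C ∧ ∀ t : ℂ, ‖t‖ ≤ 2 * t.re → ∀ h ξ : E, h ≠ 0 →
      ‖(fwdDiff h)^[m] (heatSymbol α t) ξ‖ ≤
        C * (‖t‖ * ‖h‖ ^ (2 * α)) * (1 + ‖ξ‖ / ‖h‖) ^ (-(m - 2 * α)) := by
  have hm₀ : m ≠ 0 := by rintro rfl; norm_num at hm; linarith
  obtain ⟨κ, C, hκ, hC, hfar⟩ := exists_norm_iterate_fwdDiff_heatSymbol_le_of_lt_norm (E := E) α hm₀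
  set A : ℝ := 2 ^ m * (2 * (κ + m) ^ (2 * α))
  have hA : 0 ≤ A := by positivity
  refine ⟨(A + C) * (1 + κ) ^ (m - 2 * α), by positivity, fun t ht h ξ hh => ?_⟩
  have hh' : 0 < ‖h‖ := norm_pos_iff.2 hh
  set q := ‖ξ‖ / ‖h‖ with hq
  have hq₀ : 0 ≤ q := by positivity
  have hξq : ‖ξ‖ = q * ‖h‖ := by rw [hq]; field_simp
  -- The two regimes give the bound with `1` and with `q` in place of `1 + q`.
  suffices ∃ s, 1 + q ≤ (1 + κ) * s ∧ ‖(fwdDiff h)^[m] (heatSymbol α t) ξ‖ ≤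
      (A + C) * (‖t‖ * ‖h‖ ^ (2 * α)) * s ^ (-(m - 2 * α)) by
    obtain ⟨s, hqs, hle⟩ := this
    calc _ ≤ (A + C) * (‖t‖ * ‖h‖ ^ (2 * α)) * s ^ (-(m - 2 * α)) := hle
      _ ≤ (A + C) * (‖t‖ * ‖h‖ ^ (2 * α)) * ((1 + κ) ^ (m - 2 * α) * (1 + q) ^ (-(m - 2 * α))) := by
          gcongr
          exact rpow_neg_le_mul_rpow_neg (by positivity) (by positivity) (by linarith) hqs
      _ = _ := by ring
  rcases le_or_gt ‖ξ‖ (κ * ‖h‖) with hnear | hnear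
  · refine ⟨1, by linarith [(div_le_iff₀ hh').2 hnear], ?_⟩
    calc _ ≤ 2 ^ m * (2 * (‖t‖ * ((κ + m) * ‖h‖) ^ (2 * α))) :=
          norm_iterate_fwdDiff_heatSymbol_le_of_norm_le hα.le hm₀
            (by linarith [norm_nonneg t]) hnear
      _ = A * (‖t‖ * ‖h‖ ^ (2 * α)) * 1 ^ (-(m - 2 * α)) := by
          rw [Real.one_rpow, Real.mul_rpow (by positivity) hh'.le]; ring
      _ ≤ _ := by gcongr; linarith
  · have hκq : κ < q := (lt_div_iff₀ hh').2 hnear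
    have hq₁ : 0 < q := by linarith
    refine ⟨q, by nlinarith, ?_⟩
    calc _ ≤ C * (‖t‖ * ‖ξ‖ ^ (2 * α)) * (‖h‖ / ‖ξ‖) ^ m := hfar t ht h ξ hh hnear
      _ = C * (‖t‖ * ‖h‖ ^ (2 * α)) * q ^ (-(m - 2 * α)) := by
          rw [show ‖h‖ / ‖ξ‖ = q⁻¹ by rw [hq, inv_div], hξq, Real.mul_rpow hq₀ hh'.le, neg_sub,
            Real.rpow_sub hq₁, Real.rpow_natCast, inv_pow]
          ring
      _ ≤ _ := by gcongr; linarith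

end SymbolDifferences

section HolomorphicIntegrals

variable {X : Type*} [MeasurableSpace X] {ν : Measure X}

theorem aestronglyMeasurable_of_hasDerivAt_param {𝕜 E : Type*} [NontriviallyNormedField 𝕜]
    [NormedAddCommGroup E] [NormedSpace 𝕜 E] {F : 𝕜 → X → E} {F' : X → E} {t₀ : 𝕜}
    (hmeas : ∀ᶠ t in nhds t₀, AEStronglyMeasurable (F t) ν)
    (hderiv : ∀ᵐ a ∂ν, HasDerivAt (fun t => F t a) (F' a) t₀) : AEStronglyMeasurable F' ν := by
  obtain ⟨u, hu⟩ : ∃ u : ℕ → 𝕜, Tendsto u atTop (nhdsWithin t₀ {t₀}ᶜ) :=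
    Filter.exists_seq_tendsto _
  obtain ⟨N, hN⟩ := eventually_atTop.1
    ((hu.mono_right nhdsWithin_le_nhds).eventually hmeas)
  refine aestronglyMeasurable_of_tendsto_ae atTop
    (f := fun k a => slope (fun t => F t a) t₀ (u (k + N))) (fun k => ?_) ?_
  · simp only [slope, vsub_eq_sub]
    exact ((hN _ (by omega)).sub hmeas.self_of_nhds).const_smul (u (k + N) - t₀)⁻¹
  · filter_upwards [hderiv] with a ha
    exact (hasDerivAt_iff_tendsto_slope.1 ha).comp (hu.comp (tendsto_add_atTop_nat N))

-- Cauchy's estimate turns the domination of `F` into a domination of its derivative.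
theorem differentiableOn_integral_of_locally_dominated {E : Type*} [NormedAddCommGroup E]
    [NormedSpace ℂ E] {F : ℂ → X → E} {U : Set ℂ} (hU : IsOpen U)
    (hmeas : ∀ t ∈ U, AEStronglyMeasurable (F t) ν)
    (hdiff : ∀ᵐ a ∂ν, DifferentiableOn ℂ (fun t => F t a) U)
    (hbound : ∀ t₀ ∈ U, ∃ R > 0, ∃ g : X → ℝ, Integrable g ν ∧
      ∀ᵐ a ∂ν, ∀ t ∈ Metric.ball t₀ R, ‖F t a‖ ≤ g a) :
    DifferentiableOn ℂ (fun t => ∫ a, F t a ∂ν) U := by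
  intro t₀ ht₀
  obtain ⟨R, hR, g, hg, hF⟩ := hbound t₀ ht₀
  obtain ⟨R', hR', hRU⟩ := Metric.isOpen_iff.1 hU t₀ ht₀
  set r := min R R' / 2 with hr
  have hr₀ : 0 < r := by positivity
  have hball : ∀ t ∈ Metric.ball t₀ r, Metric.closedBall t r ⊆ Metric.ball t₀ (min R R') :=
    fun t ht => Metric.closedBall_subset_ball' (by linarith [Metric.mem_ball.1 ht])
  have hballR : ∀ t ∈ Metric.ball t₀ r, Metric.closedBall t r ⊆ Metric.ball t₀ R :=
    fun t ht => (hball t ht).trans (Metric.ball_subset_ball (min_le_left _ _))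
  have hballU : ∀ t ∈ Metric.ball t₀ r, Metric.closedBall t r ⊆ U :=
    fun t ht => (hball t ht).trans ((Metric.ball_subset_ball (min_le_right _ _)).trans hRU)
  have hderiv : ∀ᵐ a ∂ν, ∀ t ∈ U, HasDerivAt (fun t => F t a) (deriv (fun t => F t a) t) t := by
    filter_upwards [hdiff] with a ha t ht
    exact ((ha t ht).differentiableAt (hU.mem_nhds ht)).hasDerivAt
  have hmeas_near : ∀ᶠ t in nhds t₀, AEStronglyMeasurable (F t) ν := by
    filter_upwards [hU.mem_nhds ht₀] with t ht using hmeas t ht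
  refine (hasDerivAt_integral_of_dominated_loc_of_deriv_le (bound := fun a => g a / r)
    (F' := fun t a => deriv (fun t => F t a) t) (Metric.ball_mem_nhds t₀ hr₀) hmeas_near
    (hg.mono' (hmeas _ ht₀) ?_) (aestronglyMeasurable_of_hasDerivAt_param hmeas_near ?_) ?_
    (hg.div_const r) ?_).2.differentiableAt.differentiableWithinAt
  · filter_upwards [hF] with a ha using ha t₀ (Metric.mem_ball_self hR)
  · filter_upwards [hderiv] with a ha using ha t₀ ht₀
  · filter_upwards [hF, hdiff] with a ha hd t ht
    exact Complex.norm_deriv_le_of_forall_mem_sphere_norm_le hr₀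
      ((hd.mono (hballU t ht)).diffContOnCl_ball subset_rfl)
      fun w hw => ha w (hballR t ht (Metric.sphere_subset_closedBall hw))
  · filter_upwards [hderiv] with a ha t ht
    exact ha t (hballU t ht (Metric.mem_closedBall_self hr₀.le))

end HolomorphicIntegrals

section ExponentialIntegrals

variable {E : Type*} [NormedAddCommGroup E] [NormedSpace ℝ E] [FiniteDimensional ℝ E]
  [MeasurableSpace E] [BorelSpace E] (μ : Measure E) [μ.IsAddHaarMeasure]

theorem integrable_exp_neg_mul_norm_rpow {p b : ℝ} (hp : 0 < p) (hb : 0 < b) :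
    Integrable (fun ξ : E => Real.exp (-b * ‖ξ‖ ^ p)) μ := by
  rcases subsingleton_or_nontrivial E with hE | hE
  · have hcont : Continuous (fun ξ : E => Real.exp (-b * ‖ξ‖ ^ p)) := by
      fun_prop (disch := exact hp.le)
    exact hcont.integrable_of_hasCompactSupport (.of_compactSpace _)
  · rw [integrable_fun_norm_addHaar μ (f := fun r : ℝ => Real.exp (-b * r ^ p))]
    simpa [Real.rpow_natCast] using integrableOn_rpow_mul_exp_neg_mul_rpow
      (s := ((Module.finrank ℝ E - 1 : ℕ) : ℝ))
      (neg_one_lt_zero.trans_le (Nat.cast_nonneg _)) hp hb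

theorem integral_exp_neg_mul_norm_rpow {p b : ℝ} (hp : 0 < p) (hb : 0 < b) :
    ∫ ξ : E, Real.exp (-b * ‖ξ‖ ^ p) ∂μ =
      b ^ (-(Module.finrank ℝ E : ℝ) / p) * ∫ ξ : E, Real.exp (-‖ξ‖ ^ p) ∂μ := by
  have hscale := Measure.integral_comp_smul_of_nonneg μ (fun ξ => Real.exp (-‖ξ‖ ^ p))
    (b ^ p⁻¹) (hR := by positivity)
  have hpow : ∀ ξ : E, -‖b ^ p⁻¹ • ξ‖ ^ p = -b * ‖ξ‖ ^ p := fun ξ => by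
    rw [norm_smul, Real.norm_of_nonneg (by positivity),
      Real.mul_rpow (by positivity) (by positivity), Real.rpow_inv_rpow hb.le hp.ne', neg_mul]
  simp only [hpow] at hscale
  rw [hscale, smul_eq_mul, ← Real.rpow_natCast, ← Real.rpow_mul hb.le, ← Real.rpow_neg hb.le]
  congr 2
  ring

end ExponentialIntegrals

section HeatKernel

open scoped FourierTransform

variable {E : Type*} [NormedAddCommGroup E] [InnerProductSpace ℝ E] [FiniteDimensional ℝ E]
  [MeasurableSpace E] [BorelSpace E] {α : ℝ}

theorem integrable_heatSymbol (hα : 0 < α) {t : ℂ} (ht : 0 < t.re) :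
    Integrable (heatSymbol α t : E → ℂ) :=
  (integrable_exp_neg_mul_norm_rpow volume (by positivity) ht).mono'
    ((continuous_heatSymbol hα.le).comp (.prodMk_right t)).aestronglyMeasurable
    (.of_forall fun ξ => (norm_heatSymbol α t ξ).le)

/-- The free heat kernel `K₀(t,x)` at complex time `t`, as an inverse Fourier transform. The scaling
by `2π` converts Mathlib's `e^{2πi x·ξ}` to `e^{i x·ξ}`. -/
noncomputable def heatKernel (α : ℝ) (t : ℂ) (x : E) : ℂ :=
  ((2 * π) ^ (-(Module.finrank ℝ E : ℝ)) : ℝ) • 𝓕⁻ (heatSymbol α t : E → ℂ) ((2 * π)⁻¹ • x)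

theorem K0_eq_heatKernel (n : ℕ) (α t : ℝ) (x : EuclideanSpace ℝ (Fin n)) :
    K0 n α t x = heatKernel α (t : ℂ) x := by
  rw [K0, heatKernel, Real.fourierInv_eq', finrank_euclideanSpace_fin]
  congr 2 with ξ
  rw [smul_eq_mul, inner_smul_right, real_inner_comm, mul_inv_cancel_left₀ (by positivity),
    mul_comm Complex.I, heatSymbol]

theorem norm_heatKernel_eq_norm_fourier (t : ℂ) (x : E) :
    ‖heatKernel α t x‖ = (2 * π) ^ (-(Module.finrank ℝ E : ℝ)) *
      ‖𝓕 (heatSymbol α t : E → ℂ) (-((2 * π)⁻¹ • x))‖ := by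
  rw [heatKernel, norm_smul, Real.norm_of_nonneg (by positivity), Real.fourierInv_eq_fourier_neg]

theorem exists_norm_heatKernel_le (hα : 0 < α) : ∃ C : ℝ, 0 ≤ C ∧ ∀ t : ℂ, 0 < t.re → ∀ x : E,
    ‖heatKernel α t x‖ ≤ C * t.re ^ (-(Module.finrank ℝ E : ℝ) / (2 * α)) := by
  refine ⟨(2 * π) ^ (-(Module.finrank ℝ E : ℝ)) * ∫ ξ : E, Real.exp (-‖ξ‖ ^ (2 * α)),
    by positivity, fun t ht x => ?_⟩
  have hint : ∫ ξ : E, ‖heatSymbol α t ξ‖ = t.re ^ (-(Module.finrank ℝ E : ℝ) / (2 * α)) *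
      ∫ ξ : E, Real.exp (-‖ξ‖ ^ (2 * α)) := by
    simp only [norm_heatSymbol]
    exact integral_exp_neg_mul_norm_rpow volume (by positivity) ht
  rw [norm_heatKernel_eq_norm_fourier, mul_assoc, mul_comm (∫ _, _), ← hint]
  gcongr
  exact norm_fourier_le_integral_norm _ _

theorem exists_norm_heatKernel_le_of_ne_zero (hα : 0 < α) : ∃ C : ℝ, 0 ≤ C ∧
    ∀ t : ℂ, 0 < t.re → ‖t‖ ≤ 2 * t.re → ∀ x : E, x ≠ 0 →
      ‖heatKernel α t x‖ ≤ C * (‖t‖ * ‖x‖ ^ (-(Module.finrank ℝ E + 2 * α))) := by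
  set d : ℝ := (Module.finrank ℝ E : ℝ) with hd
  obtain ⟨m, hm⟩ := exists_nat_gt (d + 2 * α)
  obtain ⟨C, hC, hpt⟩ := exists_norm_iterate_fwdDiff_heatSymbol_le (E := E) hα (m := m)
    (by linarith [show 0 ≤ d from Nat.cast_nonneg _])
  set w : E → ℝ := fun ξ => (1 + ‖ξ‖) ^ (-(m - 2 * α))
  have hw : Integrable w := integrable_one_add_norm (by linarith)
  refine ⟨(2 * π) ^ (-d) * (C * π ^ (d + 2 * α) * ∫ ξ, w ξ), by positivity,
    fun t ht hsector x hx => ?_⟩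
  have hx' : 0 < ‖x‖ := norm_pos_iff.2 hx
  set y : E := -((2 * π)⁻¹ • x) with hy
  have hyx : ‖y‖ = (2 * π)⁻¹ * ‖x‖ := by
    rw [hy, norm_neg, norm_smul, Real.norm_of_nonneg (by positivity)]
  set h : E := (1 / (2 * ‖y‖ ^ 2) : ℝ) • y with hh
  have hhx : ‖h‖ = π / ‖x‖ := by
    rw [hh, norm_smul, Real.norm_of_nonneg (by positivity), hyx]; field_simp
  have hh₀ : 0 < ‖h‖ := by rw [hhx]; positivity
  have hy₀ : y ≠ 0 := norm_pos_iff.1 (by rw [hyx]; positivity)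
  have hwh (ξ : E) : (1 + ‖ξ‖ / ‖h‖) ^ (-(m - 2 * α)) = w (‖h‖⁻¹ • ξ) := by
    simp only [w, norm_smul, norm_inv, norm_norm, div_eq_inv_mul]
  rw [norm_heatKernel_eq_norm_fourier, mul_assoc]
  gcongr
  calc ‖𝓕 (heatSymbol α t : E → ℂ) y‖ ≤ ∫ ξ, ‖(fwdDiff h)^[m] (heatSymbol α t) ξ‖ :=
        norm_fourier_le_integral_norm_iterate_fwdDiff (integrable_heatSymbol hα ht) hy₀ m
    _ ≤ ∫ ξ, C * (‖t‖ * ‖h‖ ^ (2 * α)) * w (‖h‖⁻¹ • ξ) :=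
        integral_mono_of_nonneg (.of_forall fun ξ => norm_nonneg _)
          ((hw.comp_smul (by positivity)).const_mul _)
          (.of_forall fun ξ => (hpt t hsector h ξ (norm_pos_iff.1 hh₀)).trans_eq (by rw [hwh]))
    _ = C * ‖t‖ * ‖h‖ ^ (d + 2 * α) * ∫ ξ, w ξ := by
        rw [integral_const_mul, Measure.integral_comp_inv_smul_of_nonneg _ _ hh₀.le,
          Real.rpow_add hh₀, hd, Real.rpow_natCast, smul_eq_mul]
        ring
    _ = C * π ^ (d + 2 * α) * (∫ ξ, w ξ) * (‖t‖ * ‖x‖ ^ (-(d + 2 * α))) := by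
        rw [hhx, Real.div_rpow pi_pos.le hx'.le, Real.rpow_neg hx'.le]
        ring

theorem continuous_heatKernel (hα : 0 < α) {t : ℂ} (ht : 0 < t.re) :
    Continuous (heatKernel α t : E → ℂ) := by
  have hfourier : Continuous (𝓕 (heatSymbol α t : E → ℂ)) :=
    VectorFourier.fourierIntegral_continuous Real.continuous_fourierChar
      (innerₗ E).toContinuousBilinearMap.continuous₂ (integrable_heatSymbol hα ht)
  unfold heatKernel
  simp only [Real.fourierInv_eq_fourier_neg]
  fun_prop

theorem stronglyMeasurable_heatKernel (hα : 0 ≤ α) :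
    StronglyMeasurable (fun p : ℂ × E => heatKernel α p.1 p.2) := by
  have hsymbol : Continuous (fun q : (ℂ × E) × E => heatSymbol α q.1.1 q.2) :=
    (continuous_heatSymbol hα).comp (f := fun q : (ℂ × E) × E => (q.1.1, q.2)) (by fun_prop)
  have hfourier : StronglyMeasurable (fun p : ℂ × E =>
      𝓕⁻ (heatSymbol α p.1 : E → ℂ) ((2 * π)⁻¹ • p.2)) := by
    simp only [Real.fourierInv_eq']
    exact StronglyMeasurable.integral_prod_right
      (f := fun (p : ℂ × E) ξ => Complex.exp (_) • heatSymbol α p.1 ξ)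
      (Continuous.stronglyMeasurable (by fun_prop))
  exact hfourier.const_smul ((2 * π) ^ (-(Module.finrank ℝ E : ℝ)) : ℝ)

theorem differentiableOn_heatKernel (hα : 0 < α) (x : E) :
    DifferentiableOn ℂ (fun t => heatKernel α t x) {t : ℂ | 0 < t.re} := by
  have hU : IsOpen {t : ℂ | 0 < t.re} := isOpen_lt continuous_const Complex.continuous_re
  suffices DifferentiableOn ℂ (fun t => 𝓕⁻ (heatSymbol α t : E → ℂ) ((2 * π)⁻¹ • x))
      {t : ℂ | 0 < t.re} from this.fun_const_smul ((2 * π) ^ (-(Module.finrank ℝ E : ℝ)) : ℝ)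
  simp only [Real.fourierInv_eq]
  refine differentiableOn_integral_of_locally_dominated hU (fun t _ => ?_)
    (.of_forall fun ξ => ?_) fun t₀ ht₀ => ?_
  · exact (Continuous.smul (by fun_prop)
      ((continuous_heatSymbol hα.le).comp (.prodMk_right t))).aestronglyMeasurable
  · unfold heatSymbol
    fun_prop
  · have ht₀' : 0 < t₀.re := ht₀
    refine ⟨t₀.re / 2, half_pos ht₀', _, integrable_exp_neg_mul_norm_rpow volume
      (p := 2 * α) (by positivity) (half_pos ht₀'), .of_forall fun ξ t ht => ?_⟩
    have hre : t₀.re / 2 ≤ t.re := by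
      have hclose := (abs_lt.1 ((Complex.abs_re_le_norm _).trans_lt (mem_ball_iff_norm.1 ht))).1
      rw [Complex.sub_re] at hclose
      linarith
    rw [Circle.norm_smul, norm_heatSymbol]
    gcongr

end HeatKernel

section Majorant

variable {d α μ r : ℝ}

/-- The classical majorant `min(t r^{-(d+2α)}, t^{-d/(2α)})` of the heat kernel of `(-Δ)^α` in
dimension `d`, as a function of the time `t` and the distance `r`. -/
noncomputable def heatMajorant (d α t r : ℝ) : ℝ≥0∞ :=
  min (ENNReal.ofReal t * ENNReal.ofReal r ^ (-(d + 2 * α))) (ENNReal.ofReal (t ^ (-d / (2 * α))))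

/-- The Laplace transform in time of `heatMajorant`; it majorizes the free resolvent kernel. -/
noncomputable def greenMajorant (d α μ r : ℝ) : ℝ≥0∞ :=
  ∫⁻ t in Set.Ioi 0, ENNReal.ofReal (Real.exp (-μ * t)) * heatMajorant d α t r

theorem measurable_heatMajorant (d α : ℝ) :
    Measurable fun p : ℝ × ℝ => heatMajorant d α p.1 p.2 := by
  unfold heatMajorant
  fun_prop

theorem measurable_greenMajorant (d α μ : ℝ) : Measurable (greenMajorant d α μ) := by
  have := (measurable_heatMajorant d α).comp measurable_swap
  exact Measurable.lintegral_prod_right'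
    (f := fun p : ℝ × ℝ => ENNReal.ofReal (Real.exp (-μ * p.2)) * heatMajorant d α p.2 p.1)
    (by fun_prop)

theorem exists_enorm_heatKernel_le_heatMajorant {E : Type*} [NormedAddCommGroup E]
    [InnerProductSpace ℝ E] [FiniteDimensional ℝ E] [MeasurableSpace E] [BorelSpace E]
    (hα : 0 < α) : ∃ C : ℝ≥0∞, C ≠ ⊤ ∧ ∀ t : ℝ, 0 < t → ∀ x : E,
      ‖heatKernel α (t : ℂ) x‖ₑ ≤ C * heatMajorant (Module.finrank ℝ E) α t ‖x‖ := by
  obtain ⟨C₁, hC₁, hunif⟩ := exists_norm_heatKernel_le (E := E) hα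
  obtain ⟨C₂, hC₂, hdecay⟩ := exists_norm_heatKernel_le_of_ne_zero (E := E) hα
  refine ⟨ENNReal.ofReal (C₁ + C₂ + 1), ofReal_ne_top, fun t ht x => ?_⟩
  have hC : ENNReal.ofReal (C₁ + C₂ + 1) ≠ 0 := (ofReal_pos.2 (by positivity)).ne'
  rw [heatMajorant, mul_min_of_nonneg _ _ zero_le, ← ofReal_norm]
  refine le_min ?_ ?_
  · rcases eq_or_ne x 0 with rfl | hx
    · rw [norm_zero, ENNReal.ofReal_zero, ENNReal.zero_rpow_of_neg (neg_lt_zero.2 (by positivity)),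
        mul_top (ofReal_pos.2 ht).ne', mul_top hC]
      exact le_top
    · rw [ofReal_rpow_of_pos (norm_pos_iff.2 hx), ← ofReal_mul ht.le, ← ofReal_mul (by positivity)]
      refine ofReal_le_ofReal ((hdecay t (by simpa using ht) ?_ x hx).trans ?_)
      · rw [Complex.norm_of_nonneg ht.le, Complex.ofReal_re]
        linarith
      · rw [Complex.norm_of_nonneg ht.le]
        gcongr
        linarith
  · rw [← ofReal_mul (by positivity)]
    refine ofReal_le_ofReal ((hunif t (by simpa using ht) x).trans ?_)
    rw [Complex.ofReal_re]
    gcongr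
    linarith

theorem heatMajorant_le_of_le_two_mul (hd : 0 < d + 2 * α) (t : ℝ) {s : ℝ} (h : r ≤ 2 * s) :
    heatMajorant d α t s ≤ 2 ^ (d + 2 * α) * heatMajorant d α t r := by
  have hpow : ENNReal.ofReal s ^ (-(d + 2 * α)) ≤
      2 ^ (d + 2 * α) * ENNReal.ofReal r ^ (-(d + 2 * α)) := calc
    ENNReal.ofReal s ^ (-(d + 2 * α))
        = 2 ^ (d + 2 * α) * (2 * ENNReal.ofReal s) ^ (-(d + 2 * α)) := by
      rw [mul_rpow_of_ne_top ofNat_ne_top ofReal_ne_top, ← mul_assoc,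
        ← ENNReal.rpow_add _ _ two_ne_zero ofNat_ne_top, add_neg_cancel, ENNReal.rpow_zero, one_mul]
    _ ≤ 2 ^ (d + 2 * α) * ENNReal.ofReal r ^ (-(d + 2 * α)) := by
      gcongr 2 ^ (d + 2 * α) * ?_
      rw [ENNReal.rpow_neg, ENNReal.rpow_neg]
      gcongr
      rw [← ofReal_ofNat, ← ofReal_mul zero_le_two]
      exact ofReal_le_ofReal h
  rw [heatMajorant, heatMajorant, mul_min_of_nonneg _ _ zero_le]
  refine min_le_min ?_ (le_mul_of_one_le_left zero_le (ENNReal.one_le_rpow one_le_two hd))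
  rw [mul_left_comm]
  gcongr

theorem greenMajorant_le_of_le_two_mul (hd : 0 < d + 2 * α) (μ : ℝ) {s : ℝ} (h : r ≤ 2 * s) :
    greenMajorant d α μ s ≤ 2 ^ (d + 2 * α) * greenMajorant d α μ r := by
  rw [greenMajorant, greenMajorant,
    ← lintegral_const_mul' _ _ (rpow_ne_top_of_nonneg hd.le ofNat_ne_top)]
  refine lintegral_mono fun t => ?_
  rw [mul_left_comm]
  gcongr
  exact heatMajorant_le_of_le_two_mul hd t h

theorem greenMajorant_mul_greenMajorant_le (hd : 0 < d + 2 * α) (μ : ℝ) {a b : ℝ}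
    (h : r ≤ a + b) :
    greenMajorant d α μ a * greenMajorant d α μ b ≤
      2 ^ (d + 2 * α) * greenMajorant d α μ r *
        (greenMajorant d α μ a + greenMajorant d α μ b) := by
  wlog hab : a ≤ b generalizing a b
  · rw [mul_comm (greenMajorant d α μ a), add_comm (greenMajorant d α μ a)]
    exact this (by linarith) (le_of_not_ge hab)
  calc greenMajorant d α μ a * greenMajorant d α μ b
      ≤ greenMajorant d α μ a * (2 ^ (d + 2 * α) * greenMajorant d α μ r) := by
        gcongr
        exact greenMajorant_le_of_le_two_mul hd μ (by linarith)
    _ = 2 ^ (d + 2 * α) * greenMajorant d α μ r * greenMajorant d α μ a := mul_comm _ _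
    _ ≤ _ := by gcongr; exact le_self_add

theorem exists_greenMajorant_le_rpow_neg (d α : ℝ) (hμ : 0 < μ) : ∃ C : ℝ≥0∞, C ≠ ⊤ ∧
    ∀ r, 0 < r → greenMajorant d α μ r ≤ C * ENNReal.ofReal (r ^ (-(d + 2 * α))) := by
  have hint : IntegrableOn (fun t : ℝ => t * Real.exp (-μ * t)) (Set.Ioi 0) := by
    simpa using integrableOn_rpow_mul_exp_neg_mul_rpow (p := 1) (s := 1) (by norm_num) one_pos hμ
  refine ⟨_, hint.lintegral_lt_top.ne, fun r hr => ?_⟩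
  rw [greenMajorant, ← lintegral_mul_const' _ _ ofReal_ne_top]
  refine lintegral_mono fun t => ?_
  rw [mul_comm t, ofReal_mul (Real.exp_pos _).le, mul_assoc, ← ofReal_rpow_of_pos hr]
  gcongr
  exact min_le_left _ _

theorem greenMajorant_ne_top (d α : ℝ) (hμ : 0 < μ) (hr : 0 < r) : greenMajorant d α μ r ≠ ⊤ := by
  obtain ⟨C, hC, h⟩ := exists_greenMajorant_le_rpow_neg d α hμ
  exact ne_top_of_le_ne_top (mul_ne_top hC ofReal_ne_top) (h r hr)

theorem greenMajorant_le_add_setLIntegral (d α : ℝ) (hμ : 0 ≤ μ) (hr : 0 < r) :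
    greenMajorant d α μ r ≤ ENNReal.ofReal (r ^ (2 * α - d)) +
      ∫⁻ t in Set.Ioi (r ^ (2 * α)), ENNReal.ofReal (Real.exp (-μ * t) * t ^ (-d / (2 * α))) := by
  have hT : 0 < r ^ (2 * α) := by positivity
  rw [greenMajorant, ← Set.Ioc_union_Ioi_eq_Ioi hT.le]
  refine (lintegral_union_le _ _ _).trans (add_le_add ?_ (lintegral_mono fun t => ?_))
  · calc ∫⁻ t in Set.Ioc 0 (r ^ (2 * α)), ENNReal.ofReal (Real.exp (-μ * t)) * heatMajorant d α t r
        ≤ ∫⁻ _ in Set.Ioc 0 (r ^ (2 * α)), ENNReal.ofReal (r ^ (2 * α) * r ^ (-(d + 2 * α))) := by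
          refine setLIntegral_mono' measurableSet_Ioc fun t ht => ?_
          rw [ofReal_mul hT.le, ← ofReal_rpow_of_pos hr (p := -(d + 2 * α))]
          refine (mul_le_of_le_one_left zero_le (ofReal_le_one.2 (Real.exp_le_one_iff.2 ?_))).trans
            ((min_le_left _ _).trans ?_)
          · nlinarith [ht.1]
          · gcongr
            exact ht.2
      _ = ENNReal.ofReal (r ^ (2 * α - d)) := by
          rw [setLIntegral_const, Real.volume_Ioc, sub_zero, ← ofReal_mul (by positivity),
            ← Real.rpow_add hr, ← Real.rpow_add hr]
          ring_nf
  · rw [ofReal_mul (Real.exp_pos _).le]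
    gcongr
    exact min_le_right _ _

theorem exists_greenMajorant_le_rpow_sub (hα : 0 < α) (hd : 2 * α < d) (hμ : 0 ≤ μ) :
    ∃ C : ℝ, 0 ≤ C ∧ ∀ r, 0 < r → greenMajorant d α μ r ≤ ENNReal.ofReal (C * r ^ (2 * α - d)) := by
  have hs : -d / (2 * α) < -1 := by rw [div_lt_iff₀ (by positivity)]; linarith
  have hC : 0 ≤ -1 / (-d / (2 * α) + 1) := div_nonneg_of_nonpos (by norm_num) (by linarith)
  refine ⟨1 + -1 / (-d / (2 * α) + 1), by positivity, fun r hr => ?_⟩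
  have hT : 0 < r ^ (2 * α) := by positivity
  have htail : ∫⁻ t in Set.Ioi (r ^ (2 * α)),
      ENNReal.ofReal (Real.exp (-μ * t) * t ^ (-d / (2 * α))) ≤
      ENNReal.ofReal (-1 / (-d / (2 * α) + 1) * r ^ (2 * α - d)) := calc
    _ ≤ ∫⁻ t in Set.Ioi (r ^ (2 * α)), ENNReal.ofReal (t ^ (-d / (2 * α))) := by
      refine setLIntegral_mono' measurableSet_Ioi fun t ht => ofReal_le_ofReal ?_
      have ht' : 0 < t := hT.trans ht
      exact mul_le_of_le_one_left (by positivity) (Real.exp_le_one_iff.2 (by nlinarith))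
    _ = ENNReal.ofReal (∫ t in Set.Ioi (r ^ (2 * α)), t ^ (-d / (2 * α))) := by
      refine (ofReal_integral_eq_lintegral_ofReal (integrableOn_Ioi_rpow_of_lt hs hT) ?_).symm
      filter_upwards [ae_restrict_mem measurableSet_Ioi] with t ht
      exact Real.rpow_nonneg (hT.trans ht).le _
    _ = ENNReal.ofReal (-1 / (-d / (2 * α) + 1) * r ^ (2 * α - d)) := by
      have hexp : 2 * α * (-d / (2 * α) + 1) = 2 * α - d := by field_simp; ring
      rw [integral_Ioi_rpow_of_lt hs hT, ← Real.rpow_mul hr.le, hexp]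
      ring_nf
  refine (greenMajorant_le_add_setLIntegral d α hμ hr).trans ((add_le_add_right htail _).trans ?_)
  rw [← ofReal_add (by positivity) (by positivity), add_mul, one_mul]

theorem setLIntegral_Ioc_exp_mul_inv_le {T : ℝ} (hT : 0 < T) (hT₁ : T ≤ 1) (hμ : 0 ≤ μ) :
    ∫⁻ t in Set.Ioc T 1, ENNReal.ofReal (Real.exp (-μ * t) * t⁻¹) ≤
      ENNReal.ofReal (Real.log (1 / T)) := by
  have hint : IntegrableOn (fun t : ℝ => t⁻¹) (Set.Ioc T 1) := by
    rw [← intervalIntegrable_iff_integrableOn_Ioc_of_le hT₁]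
    refine intervalIntegral.intervalIntegrable_inv (fun t ht => ?_) continuousOn_id
    rw [Set.uIcc_of_le hT₁] at ht
    exact (hT.trans_le ht.1).ne'
  rw [← integral_inv_of_pos hT one_pos, intervalIntegral.integral_of_le hT₁,
    ofReal_integral_eq_lintegral_ofReal hint]
  · refine setLIntegral_mono' measurableSet_Ioc fun t ht => ofReal_le_ofReal ?_
    have ht' : 0 < t := hT.trans ht.1
    exact mul_le_of_le_one_left (by positivity) (Real.exp_le_one_iff.2 (by nlinarith))
  · filter_upwards [ae_restrict_mem measurableSet_Ioc] with t ht
    exact inv_nonneg.2 (hT.trans ht.1).le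

theorem exists_greenMajorant_le_log (hα : 0 < α) (hμ : 0 < μ) : ∃ C : ℝ, 0 ≤ C ∧
    ∀ r, 0 < r → r ≤ 1 →
      greenMajorant (2 * α) α μ r ≤ ENNReal.ofReal (C + Real.log (r ^ (-(2 * α)))) := by
  have hint : IntegrableOn (fun t : ℝ => Real.exp (-μ * t)) (Set.Ioi 1) :=
    integrableOn_exp_mul_Ioi (by linarith) 1
  have hA : 0 ≤ ∫ t in Set.Ioi (1 : ℝ), Real.exp (-μ * t) := by positivity
  refine ⟨1 + ∫ t in Set.Ioi (1 : ℝ), Real.exp (-μ * t), by positivity, fun r hr hr₁ => ?_⟩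
  have hT : 0 < r ^ (2 * α) := by positivity
  have hT₁ : r ^ (2 * α) ≤ 1 := Real.rpow_le_one hr.le hr₁ (by positivity)
  have hlog : 0 ≤ Real.log (1 / r ^ (2 * α)) := Real.log_nonneg (by rwa [le_div_iff₀ hT, one_mul])
  have htail : ∫⁻ t in Set.Ioi 1, ENNReal.ofReal (Real.exp (-μ * t) * t⁻¹) ≤
      ENNReal.ofReal (∫ t in Set.Ioi (1 : ℝ), Real.exp (-μ * t)) := by
    rw [ofReal_integral_eq_lintegral_ofReal hint (.of_forall fun t => (Real.exp_pos _).le)]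
    refine setLIntegral_mono' measurableSet_Ioi fun t ht => ofReal_le_ofReal ?_
    exact mul_le_of_le_one_right (Real.exp_pos _).le (inv_le_one_of_one_le₀ (le_of_lt ht))
  refine (greenMajorant_le_add_setLIntegral _ α hμ.le hr).trans ?_
  rw [neg_div, div_self (mul_ne_zero two_ne_zero hα.ne'), sub_self, Real.rpow_zero, add_assoc,
    Real.rpow_neg hr.le (2 * α), ← one_div, ofReal_add zero_le_one (add_nonneg hA hlog)]
  simp only [Real.rpow_neg_one]
  gcongr
  rw [← Set.Ioc_union_Ioi_eq_Ioi hT₁, add_comm, ofReal_add hlog hA]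
  exact (lintegral_union_le _ _ _).trans
    (add_le_add (setLIntegral_Ioc_exp_mul_inv_le hT hT₁ hμ.le) htail)

theorem exists_greenMajorant_le (hα : 0 < α) (hd : d < 2 * α) (hμ : 0 < μ) :
    ∃ C : ℝ≥0∞, C ≠ ⊤ ∧ ∀ r, greenMajorant d α μ r ≤ C := by
  have hs : -1 < -d / (2 * α) := by rw [lt_div_iff₀ (by positivity)]; linarith
  have hint : IntegrableOn (fun t : ℝ => t ^ (-d / (2 * α)) * Real.exp (-μ * t)) (Set.Ioi 0) := by
    simpa using integrableOn_rpow_mul_exp_neg_mul_rpow hs one_pos hμ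
  refine ⟨_, hint.lintegral_lt_top.ne, fun r => lintegral_mono fun t => ?_⟩
  rw [mul_comm, ofReal_mul' (Real.exp_pos _).le]
  gcongr
  exact min_le_right _ _

end Majorant

section UniformlyLocallyFinite

theorem one_add_norm_rpow_neg_le {E : Type*} [SeminormedAddCommGroup E] {p δ : ℝ} (hp : 0 ≤ p)
    {x y : E} (h : ‖x - y‖ ≤ δ) :
    (1 + ‖x‖) ^ (-p) ≤ (1 + δ) ^ p * (1 + ‖y‖) ^ (-p) := by
  have hδ : 0 ≤ δ := (norm_nonneg _).trans h
  have hxy : 1 + ‖y‖ ≤ (1 + δ) * (1 + ‖x‖) := by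
    nlinarith [norm_le_norm_add_norm_sub x y, norm_nonneg x]
  calc (1 + ‖x‖) ^ (-p) = (1 + δ) ^ p * ((1 + δ) * (1 + ‖x‖)) ^ (-p) := by
        rw [Real.mul_rpow (by positivity) (by positivity), ← mul_assoc,
          ← Real.rpow_add (by positivity), add_neg_cancel, Real.rpow_zero, one_mul]
    _ ≤ (1 + δ) ^ p * (1 + ‖y‖) ^ (-p) := by
        gcongr (1 + δ) ^ p * ?_
        exact Real.rpow_le_rpow_of_nonpos (by positivity) hxy (neg_nonpos.2 hp)

theorem lintegral_setLIntegral_ball {X : Type*} [PseudoMetricSpace X] [SecondCountableTopology X]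
    [MeasurableSpace X] [OpensMeasurableSpace X] {ν η : Measure X} [SFinite ν] [SFinite η]
    {f : X → ℝ≥0∞} (hf : Measurable f) (δ : ℝ) :
    ∫⁻ y, ∫⁻ z in Metric.ball y δ, f z ∂η ∂ν = ∫⁻ z, f z * ν (Metric.ball z δ) ∂η := by
  have hS : MeasurableSet {q : X × X | dist q.2 q.1 < δ} :=
    measurableSet_lt (by fun_prop) measurable_const
  calc ∫⁻ y, ∫⁻ z in Metric.ball y δ, f z ∂η ∂ν
      = ∫⁻ y, ∫⁻ z, {q : X × X | dist q.2 q.1 < δ}.indicator (fun q => f q.2) (y, z) ∂η ∂ν := by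
        refine lintegral_congr fun y => ?_
        rw [← lintegral_indicator measurableSet_ball]
        rfl
    _ = ∫⁻ z, ∫⁻ y, {q : X × X | dist q.2 q.1 < δ}.indicator (fun q => f q.2) (y, z) ∂ν ∂η :=
        lintegral_lintegral_swap ((hf.comp measurable_snd).indicator hS).aemeasurable
    _ = ∫⁻ z, f z * ν (Metric.ball z δ) ∂η := by
        refine lintegral_congr fun z => ?_
        rw [← setLIntegral_const, ← lintegral_indicator measurableSet_ball]
        refine lintegral_congr fun y => ?_
        simp only [Set.indicator, Set.mem_ofPred_eq, Metric.mem_ball, dist_comm]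

theorem exists_lintegral_one_add_norm_rpow_neg_le {E : Type*} [NormedAddCommGroup E]
    [NormedSpace ℝ E] [FiniteDimensional ℝ E] [MeasurableSpace E] [BorelSpace E]
    {ν : Measure E} [SFinite ν] {p δ : ℝ} (hp : Module.finrank ℝ E < p) (hδ : 0 < δ)
    {A : ℝ≥0∞} (hA : A ≠ ⊤) (hν : ∀ x, ν (Metric.ball x δ) ≤ A) :
    ∃ B : ℝ≥0∞, B ≠ ⊤ ∧ ∀ x, ∫⁻ y, ENNReal.ofReal ((1 + ‖x - y‖) ^ (-p)) ∂ν ≤ B := by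
  let η : Measure E := Measure.addHaar
  set v := η (Metric.ball 0 δ)
  have hv₀ : v ≠ 0 := (Metric.measure_ball_pos _ _ hδ).ne'
  set J := ∫⁻ x, ENNReal.ofReal ((1 + ‖x‖) ^ (-p)) ∂η
  have hJ : J ≠ ⊤ := (integrable_one_add_norm hp).lintegral_lt_top.ne
  set D := ENNReal.ofReal ((1 + δ) ^ p)
  refine ⟨v⁻¹ * (D * J * A), mul_ne_top (inv_ne_top.2 hv₀)
    (mul_ne_top (mul_ne_top ofReal_ne_top hJ) hA), fun x => ?_⟩
  rw [← ENNReal.mul_le_iff_le_inv hv₀ measure_ball_lt_top.ne,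
    ← lintegral_const_mul' _ _ measure_ball_lt_top.ne]
  calc ∫⁻ y, v * ENNReal.ofReal ((1 + ‖x - y‖) ^ (-p)) ∂ν
      = ∫⁻ y, ∫⁻ _ in Metric.ball y δ, ENNReal.ofReal ((1 + ‖x - y‖) ^ (-p)) ∂η ∂ν := by
        simp only [setLIntegral_const, Measure.addHaar_ball_center, v, mul_comm]
    _ ≤ ∫⁻ y, ∫⁻ z in Metric.ball y δ, D * ENNReal.ofReal ((1 + ‖x - z‖) ^ (-p)) ∂η ∂ν := by
        refine lintegral_mono fun y => setLIntegral_mono' measurableSet_ball fun z hz => ?_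
        rw [← ofReal_mul (by positivity)]
        refine ofReal_le_ofReal (one_add_norm_rpow_neg_le ((Nat.cast_nonneg _).trans hp.le) ?_)
        rw [← dist_eq_norm, dist_sub_left, dist_comm]
        exact (Metric.mem_ball.1 hz).le
    _ = ∫⁻ z, D * ENNReal.ofReal ((1 + ‖x - z‖) ^ (-p)) * ν (Metric.ball z δ) ∂η :=
        lintegral_setLIntegral_ball (by fun_prop) δ
    _ ≤ ∫⁻ z, D * ENNReal.ofReal ((1 + ‖x - z‖) ^ (-p)) * A ∂η := by
        gcongr with z
        exact hν z
    _ = D * J * A := by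
        rw [lintegral_mul_const' _ _ hA, lintegral_const_mul' _ _ ofReal_ne_top,
          lintegral_sub_left_eq_self (fun y => ENNReal.ofReal ((1 + ‖y‖) ^ (-p))) x]

end UniformlyLocallyFinite

section KatoClass

variable {n : ℕ} [NeZero n] {α μ : ℝ} {V : EuclideanSpace ℝ (Fin n) → ℝ}

theorem katoClass.exists_weight (hα : 0 < α) (hV : katoClass n α V) (hμ : 0 < μ) :
    ∃ (w : ℝ → ℝ) (δ C : ℝ), 0 < δ ∧ 0 ≤ C ∧
      (∀ r, 0 < r → r < δ → 1 + greenMajorant n α μ r ≤ ENNReal.ofReal (C * w r)) ∧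
      (⨆ x, ∫⁻ y in Metric.ball x δ, ENNReal.ofReal (w ‖x - y‖ * |V y|)) < ⊤ := by
  have hsmall {w : ℝ → ℝ} (hw : Tendsto (fun δ : ℝ => ⨆ x : EuclideanSpace ℝ (Fin n),
      ∫⁻ y in Metric.ball x δ, ENNReal.ofReal (w ‖x - y‖ * |V y|))
        (nhdsWithin 0 (Set.Ioi 0)) (nhds 0)) : ∃ δ, 0 < δ ∧ δ < Real.exp (-1) ∧
      (⨆ x, ∫⁻ y in Metric.ball x δ, ENNReal.ofReal (w ‖x - y‖ * |V y|)) < ⊤ :=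
    (((hw.eventually (gt_mem_nhds zero_lt_top)).and
      (nhdsWithin_le_nhds (gt_mem_nhds (Real.exp_pos _)))).and self_mem_nhdsWithin).exists.imp
        fun δ ⟨⟨h, hδ₁⟩, hδ⟩ => ⟨hδ, hδ₁, h⟩
  have hadd {C w : ℝ} {g : ℝ≥0∞} (hC : 0 ≤ C) (hw : 1 ≤ w) (hg : g ≤ ENNReal.ofReal (C * w)) :
      1 + g ≤ ENNReal.ofReal ((1 + C) * w) := by
    rw [add_mul, one_mul, ofReal_add (by positivity) (by positivity)]
    exact add_le_add (one_le_ofReal.2 hw) hg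
  have he : Real.exp (-1) < 1 := Real.exp_lt_one_iff.2 (by norm_num)
  unfold katoClass at hV
  split_ifs at hV with hlt heq
  · obtain ⟨δ, hδ, hδ₁, hfin⟩ := hsmall (w := fun r => r ^ (2 * α - n)) hV
    obtain ⟨C, hC, hg⟩ := exists_greenMajorant_le_rpow_sub hα hlt hμ.le
    exact ⟨_, δ, _, hδ, by positivity, fun r hr hrδ => hadd hC
      (Real.one_le_rpow_of_pos_of_le_one_of_nonpos hr (by linarith) (by linarith)) (hg r hr), hfin⟩
  · obtain ⟨δ, hδ, hδ₁, hfin⟩ := hsmall (w := fun r => Real.log (r ^ (-(n : ℝ)))) hV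
    obtain ⟨C, hC, hg⟩ := exists_greenMajorant_le_log hα hμ
    rw [heq] at hg
    refine ⟨fun r => Real.log (r ^ (-(n : ℝ))), δ, 1 + (C + 1), hδ, by positivity,
      fun r hr hrδ => ?_, hfin⟩
    have hn : (1 : ℝ) ≤ n := by exact_mod_cast NeZero.one_le
    have hlog : 1 ≤ Real.log (r ^ (-(n : ℝ))) := by
      rw [Real.log_rpow hr]
      nlinarith [(Real.log_le_iff_le_exp hr).2 (hrδ.trans hδ₁).le]
    exact hadd (by positivity) hlog
      ((hg r hr (by linarith)).trans (ofReal_le_ofReal (by nlinarith)))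
  · obtain ⟨C, hC, hg⟩ :=
      exists_greenMajorant_le hα (lt_of_le_of_ne (not_lt.1 hlt) (Ne.symm heq)) hμ
    refine ⟨fun _ => 1, 1, 1 + C.toReal, one_pos, by positivity, fun r _ _ =>
      hadd toReal_nonneg le_rfl ?_, by simpa only [one_mul] using hV⟩
    rw [mul_one, ofReal_toReal hC]
    exact hg r

theorem katoClass.exists_setLIntegral_ball_le (hα : 0 < α) (hV : katoClass n α V) (hμ : 0 < μ) :
    ∃ (δ : ℝ) (A : ℝ≥0∞), 0 < δ ∧ A ≠ ⊤ ∧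
      ∀ x, ∫⁻ y in Metric.ball x δ, (1 + greenMajorant n α μ ‖x - y‖) * ‖V y‖ₑ ≤ A := by
  obtain ⟨w, δ, C, hδ, hC, hw, hfin⟩ := hV.exists_weight hα hμ
  refine ⟨δ, ENNReal.ofReal C * ⨆ x, ∫⁻ y in Metric.ball x δ, ENNReal.ofReal (w ‖x - y‖ * |V y|),
    hδ, mul_ne_top ofReal_ne_top hfin.ne, fun x => ?_⟩
  calc ∫⁻ y in Metric.ball x δ, (1 + greenMajorant n α μ ‖x - y‖) * ‖V y‖ₑ
      ≤ ∫⁻ y in Metric.ball x δ, ENNReal.ofReal C * ENNReal.ofReal (w ‖x - y‖ * |V y|) := by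
        refine lintegral_mono_ae ?_
        filter_upwards [ae_restrict_mem measurableSet_ball,
          ae_restrict_of_ae (Measure.ae_ne volume x)] with y hy hne
        rw [Real.enorm_eq_ofReal_abs, ← ofReal_mul hC, ← mul_assoc, ofReal_mul' (abs_nonneg _)]
        gcongr
        rw [Metric.mem_ball, dist_comm, dist_eq_norm] at hy
        exact hw _ (norm_pos_iff.2 (sub_ne_zero.2 hne.symm)) hy
    _ = ENNReal.ofReal C * ∫⁻ y in Metric.ball x δ, ENNReal.ofReal (w ‖x - y‖ * |V y|) :=
        lintegral_const_mul' _ _ ofReal_ne_top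
    _ ≤ _ := by
        gcongr
        exact le_iSup (fun x => ∫⁻ y in Metric.ball x δ, ENNReal.ofReal (w ‖x - y‖ * |V y|)) x

theorem exists_greenMajorant_le_one_add_rpow_neg {d δ : ℝ} (hd : 0 ≤ d + 2 * α) (hμ : 0 < μ)
    (hδ : 0 < δ) : ∃ C : ℝ≥0∞, C ≠ ⊤ ∧
      ∀ r, δ ≤ r → greenMajorant d α μ r ≤ C * ENNReal.ofReal ((1 + r) ^ (-(d + 2 * α))) := by
  obtain ⟨C, hC, hg⟩ := exists_greenMajorant_le_rpow_neg d α hμ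
  refine ⟨C * ENNReal.ofReal ((δ / (1 + δ)) ^ (-(d + 2 * α))), mul_ne_top hC ofReal_ne_top,
    fun r hr => (hg r (hδ.trans_le hr)).trans ?_⟩
  have hr₀ : 0 < r := hδ.trans_le hr
  rw [mul_assoc, ← ofReal_mul (by positivity), ← Real.mul_rpow (by positivity) (by positivity)]
  gcongr C * ENNReal.ofReal ?_
  refine Real.rpow_le_rpow_of_nonpos (by positivity) ?_ (neg_nonpos.2 hd)
  rw [div_mul_eq_mul_div, div_le_iff₀ (by positivity)]
  linarith

/-- The potential `|V|` has bounded convolution with the majorant of the Green function of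
`(-Δ)^α + μ`. The Kato class enters the proof only through this property. -/
def HasBoundedGreenPotential (n : ℕ) (α μ : ℝ) (V : EuclideanSpace ℝ (Fin n) → ℝ) : Prop :=
  ∃ A : ℝ≥0∞, A ≠ ⊤ ∧ ∀ x, ∫⁻ z, greenMajorant n α μ ‖x - z‖ * ‖V z‖ₑ ≤ A

theorem katoClass.hasBoundedGreenPotential (hα : 0 < α) (hV : katoClass n α V)
    (hVm : AEMeasurable V) (hμ : 0 < μ) : HasBoundedGreenPotential n α μ V := by
  obtain ⟨δ, A, hδ, hA, hloc⟩ := hV.exists_setLIntegral_ball_le hα hμ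
  obtain ⟨C, hC, hg⟩ := exists_greenMajorant_le_one_add_rpow_neg (α := α) (d := n)
    (by positivity) hμ hδ
  obtain ⟨B, hB, hfar⟩ := exists_lintegral_one_add_norm_rpow_neg_le (p := n + 2 * α)
    (ν := volume.withDensity fun y => ‖V y‖ₑ) (by simpa using hα) hδ hA fun x => by
      rw [withDensity_apply _ measurableSet_ball]
      refine (lintegral_mono fun y => ?_).trans (hloc x)
      exact le_mul_of_one_le_left zero_le le_self_add
  refine ⟨A + C * B, add_ne_top.2 ⟨hA, mul_ne_top hC hB⟩, fun x => ?_⟩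
  rw [← lintegral_add_compl _ (measurableSet_ball (x := x) (ε := δ))]
  refine add_le_add ((lintegral_mono fun y => ?_).trans (hloc x)) ?_
  · gcongr
    exact le_add_self
  calc ∫⁻ y in (Metric.ball x δ)ᶜ, greenMajorant n α μ ‖x - y‖ * ‖V y‖ₑ
      ≤ ∫⁻ y in (Metric.ball x δ)ᶜ,
          C * (‖V y‖ₑ * ENNReal.ofReal ((1 + ‖x - y‖) ^ (-(n + 2 * α)))) := by
        refine setLIntegral_mono' measurableSet_ball.compl fun y hy => ?_
        rw [mul_comm, mul_left_comm]
        gcongr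
        rw [Set.mem_compl_iff, Metric.mem_ball, dist_comm, dist_eq_norm, not_lt] at hy
        exact hg _ hy
    _ ≤ C * ∫⁻ y, ‖V y‖ₑ * ENNReal.ofReal ((1 + ‖x - y‖) ^ (-(n + 2 * α))) := by
        rw [← lintegral_const_mul' _ _ hC]
        exact setLIntegral_le_lintegral _ _
    _ ≤ C * B := by
        gcongr
        refine le_of_eq_of_le ?_ (hfar x)
        exact (lintegral_withDensity_eq_lintegral_mul₀ hVm.enorm (by fun_prop)).symm

end KatoClass

section LaplaceTransform

/-- The Laplace transform at `μ` of `‖f‖`, with values in `[0, ∞]`. -/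
noncomputable def absLaplace (μ : ℝ) (f : ℝ → ℂ) : ℝ≥0∞ :=
  ∫⁻ t in Set.Ioi 0, ENNReal.ofReal (Real.exp (-μ * t)) * ‖f t‖ₑ

theorem enorm_exp_mul (μ t : ℝ) (z : ℂ) :
    ‖(Real.exp (-μ * t) : ℂ) * z‖ₑ = ENNReal.ofReal (Real.exp (-μ * t)) * ‖z‖ₑ := by
  rw [enorm_mul, enorm_eq_nnnorm, Complex.nnnorm_real, ← enorm_eq_nnnorm,
    Real.enorm_of_nonneg (Real.exp_nonneg _)]

theorem integrableOn_exp_mul_of_absLaplace_ne_top {μ : ℝ} {f : ℝ → ℂ} (hf : StronglyMeasurable f)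
    (h : absLaplace μ f ≠ ⊤) :
    IntegrableOn (fun t : ℝ => (Real.exp (-μ * t) : ℂ) * f t) (Set.Ioi 0) := by
  have hm : Measurable fun t : ℝ => (Real.exp (-μ * t) : ℂ) := by fun_prop
  refine ⟨(hm.stronglyMeasurable.mul hf).aestronglyMeasurable, ?_⟩
  simp only [hasFiniteIntegral_iff_enorm, enorm_exp_mul]
  exact h.lt_top

theorem setLIntegral_Ioi_setLIntegral_Ioo_sub_mul {f g : ℝ → ℝ≥0∞} (hf : Measurable f)
    (hg : Measurable g) : ∫⁻ t in Set.Ioi 0, ∫⁻ s in Set.Ioo 0 t, f (t - s) * g s =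
      (∫⁻ t in Set.Ioi 0, f t) * ∫⁻ t in Set.Ioi 0, g t := by
  set F := (Set.Ioi 0).indicator f
  set G := (Set.Ioi 0).indicator g
  have hF : Measurable F := hf.indicator measurableSet_Ioi
  have hG : Measurable G := hg.indicator measurableSet_Ioi
  have hFG (t : ℝ) : (Set.Ioi 0).indicator (fun t => ∫⁻ s in Set.Ioo 0 t, f (t - s) * g s) t =
      ∫⁻ s, F (t - s) * G s := by
    have hind : (Set.Ioi 0).indicator (fun t => ∫⁻ s in Set.Ioo 0 t, f (t - s) * g s) t =
        ∫⁻ s in Set.Ioo 0 t, f (t - s) * g s :=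
      Set.indicator_apply_eq_self.2 fun ht => by
        rw [Set.Ioo_eq_empty ht, setLIntegral_empty]
    rw [hind, ← lintegral_indicator measurableSet_Ioo]
    congr with s
    simp only [F, G, Set.indicator_apply, Set.mem_Ioo, Set.mem_Ioi, sub_pos]
    split_ifs <;> simp_all
  rw [← lintegral_indicator measurableSet_Ioi, ← lintegral_indicator measurableSet_Ioi,
    ← lintegral_indicator measurableSet_Ioi, lintegral_congr hFG,
    lintegral_lintegral_swap (by fun_prop), ← lintegral_const_mul _ hG]
  refine lintegral_congr fun s => ?_
  rw [lintegral_mul_const _ (by fun_prop), lintegral_sub_right_eq_self]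

theorem setLIntegral_exp_mul_setLIntegral_Ioo_sub_mul {f g : ℝ → ℂ} (hf : StronglyMeasurable f)
    (hg : StronglyMeasurable g) (μ : ℝ) :
    ∫⁻ t in Set.Ioi 0, ENNReal.ofReal (Real.exp (-μ * t)) *
      ∫⁻ s in Set.Ioo 0 t, ‖f (t - s)‖ₑ * ‖g s‖ₑ = absLaplace μ f * absLaplace μ g := by
  have := hf.enorm
  have := hg.enorm
  rw [absLaplace, absLaplace, ← setLIntegral_Ioi_setLIntegral_Ioo_sub_mul (by fun_prop)
    (by fun_prop)]
  refine lintegral_congr fun t => ?_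
  rw [← lintegral_const_mul _ (by fun_prop)]
  refine lintegral_congr fun s => ?_
  rw [show -μ * t = -μ * (t - s) + -μ * s by ring, Real.exp_add, ofReal_mul (by positivity)]
  ring

theorem setIntegral_exp_mul_setIntegral_Ioo_sub_mul {f g : ℝ → ℂ} {μ : ℝ}
    (hf : IntegrableOn (fun t : ℝ => (Real.exp (-μ * t) : ℂ) * f t) (Set.Ioi 0))
    (hg : IntegrableOn (fun t : ℝ => (Real.exp (-μ * t) : ℂ) * g t) (Set.Ioi 0)) :
    ∫ t in Set.Ioi (0 : ℝ), (Real.exp (-μ * t) : ℂ) * ∫ s in Set.Ioo 0 t, f (t - s) * g s =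
      (∫ t in Set.Ioi (0 : ℝ), (Real.exp (-μ * t) : ℂ) * f t) *
        ∫ t in Set.Ioi (0 : ℝ), (Real.exp (-μ * t) : ℂ) * g t := by
  have h := integral_posConvolution hg hf (ContinuousLinearMap.mul ℝ ℂ)
  simp only [ContinuousLinearMap.mul_apply'] at h
  rw [mul_comm (∫ t in Set.Ioi (0 : ℝ), _), ← h]
  refine setIntegral_congr_fun measurableSet_Ioi fun t ht => ?_
  rw [intervalIntegral.integral_of_le (le_of_lt ht), integral_Ioc_eq_integral_Ioo,
    ← integral_const_mul]
  congr with s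
  rw [show -μ * t = -μ * s + -μ * (t - s) by ring, Real.exp_add]
  push_cast
  ring

theorem stronglyMeasurable_setIntegral_Ioo {X G : Type*} [MeasurableSpace X] [NormedAddCommGroup G]
    [NormedSpace ℝ G] {F : X → ℝ → G} (hF : StronglyMeasurable (Function.uncurry F)) {a b : X → ℝ}
    (ha : Measurable a) (hb : Measurable b) :
    StronglyMeasurable fun x => ∫ s in Set.Ioo (a x) (b x), F x s := by
  simp only [← integral_indicator measurableSet_Ioo]
  refine StronglyMeasurable.integral_prod_right
    (f := fun x s => (Set.Ioo (a x) (b x)).indicator (F x) s) ?_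
  exact hF.indicator (s := {p : X × ℝ | p.2 ∈ Set.Ioo (a p.1) (b p.1)})
    ((measurableSet_lt (ha.comp measurable_fst) measurable_snd).inter
      (measurableSet_lt measurable_snd (hb.comp measurable_fst)))

end LaplaceTransform

section DuhamelIterates

variable {n : ℕ} {α μ : ℝ} {V : EuclideanSpace ℝ (Fin n) → ℝ}

/-- The integrand `z ↦ ∫₀ᵗ f(t-s,z) V(z) K₀(s,z-y) ds` of the Duhamel step, for
`f = K_j(·,x,·)`. -/
noncomputable def duhamelDensity (n : ℕ) (α : ℝ) (V : EuclideanSpace ℝ (Fin n) → ℝ)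
    (f : ℝ → EuclideanSpace ℝ (Fin n) → ℂ) (t : ℝ) (y z : EuclideanSpace ℝ (Fin n)) : ℂ :=
  ∫ s in Set.Ioo 0 t, f (t - s) z * (V z : ℂ) * K0 n α s (z - y)

theorem Kiter_succ (j : ℕ) (t : ℝ) (x y : EuclideanSpace ℝ (Fin n)) :
    Kiter n α V (j + 1) t x y = ∫ z, duhamelDensity n α V (Kiter n α V j · x ·) t y z := rfl

theorem stronglyMeasurable_K0 (n : ℕ) (hα : 0 ≤ α) :
    StronglyMeasurable fun p : ℝ × EuclideanSpace ℝ (Fin n) => K0 n α p.1 p.2 := by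
  simp only [K0_eq_heatKernel]
  exact (stronglyMeasurable_heatKernel hα).comp_measurable
    (g := fun p : ℝ × EuclideanSpace ℝ (Fin n) => ((p.1 : ℂ), p.2)) (by fun_prop)

theorem stronglyMeasurable_duhamelDensity (hα : 0 ≤ α) (hV : Measurable V)
    {f : ℝ → EuclideanSpace ℝ (Fin n) → ℂ} (hf : StronglyMeasurable (Function.uncurry f)) :
    StronglyMeasurable fun p : (ℝ × EuclideanSpace ℝ (Fin n)) × EuclideanSpace ℝ (Fin n) =>
      duhamelDensity n α V f p.1.1 p.1.2 p.2 := by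
  have hf' := hf.comp_measurable (g := fun q : ((ℝ × EuclideanSpace ℝ (Fin n)) ×
    EuclideanSpace ℝ (Fin n)) × ℝ => (q.1.1.1 - q.2, q.1.2)) (by fun_prop)
  have hK := (stronglyMeasurable_K0 n hα).comp_measurable
    (g := fun q : ((ℝ × EuclideanSpace ℝ (Fin n)) × EuclideanSpace ℝ (Fin n)) × ℝ =>
      (q.2, q.1.2 - q.1.1.2)) (by fun_prop)
  have hV' : Measurable fun q : ((ℝ × EuclideanSpace ℝ (Fin n)) × EuclideanSpace ℝ (Fin n)) × ℝ =>
    (V q.1.2 : ℂ) := by fun_prop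
  exact stronglyMeasurable_setIntegral_Ioo ((hf'.mul hV'.stronglyMeasurable).mul hK)
    measurable_const (by fun_prop)

theorem stronglyMeasurable_Kiter (hα : 0 ≤ α) (hV : Measurable V) (j : ℕ)
    (x : EuclideanSpace ℝ (Fin n)) :
    StronglyMeasurable (Function.uncurry (Kiter n α V j · x ·)) := by
  induction j with
  | zero =>
    exact (stronglyMeasurable_K0 n hα).comp_measurable
      (g := fun p : ℝ × EuclideanSpace ℝ (Fin n) => (p.1, x - p.2)) (by fun_prop)
  | succ j ih => exact (stronglyMeasurable_duhamelDensity hα hV ih).integral_prod_right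

theorem exists_absLaplace_K0_le (n : ℕ) (hα : 0 < α) (μ : ℝ) : ∃ C : ℝ≥0∞, C ≠ ⊤ ∧
    ∀ x, absLaplace μ (K0 n α · x) ≤ C * greenMajorant n α μ ‖x‖ := by
  obtain ⟨C, hC, h⟩ := exists_enorm_heatKernel_le_heatMajorant
    (E := EuclideanSpace ℝ (Fin n)) hα
  rw [finrank_euclideanSpace_fin] at h
  refine ⟨C, hC, fun x => ?_⟩
  rw [greenMajorant, ← lintegral_const_mul' _ _ hC]
  refine setLIntegral_mono' measurableSet_Ioi fun t ht => ?_
  rw [mul_left_comm]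
  gcongr
  exact (congrArg enorm (K0_eq_heatKernel n α t x)).trans_le (h t ht x)

theorem HasBoundedGreenPotential.congr_ae {W : EuclideanSpace ℝ (Fin n) → ℝ}
    (hV : HasBoundedGreenPotential n α μ V) (hVW : V =ᵐ[volume] W) :
    HasBoundedGreenPotential n α μ W := by
  obtain ⟨A, hA, h⟩ := hV
  refine ⟨A, hA, fun x => le_of_eq_of_le (lintegral_congr_ae ?_) (h x)⟩
  filter_upwards [hVW] with z hz
  rw [hz]

theorem HasBoundedGreenPotential.exists_lintegral_mul_le (hα : 0 < α)
    (hV : HasBoundedGreenPotential n α μ V) (hVm : Measurable V) : ∃ A : ℝ≥0∞, A ≠ ⊤ ∧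
      ∀ x y, ∫⁻ z, greenMajorant n α μ ‖x - z‖ * ‖V z‖ₑ * greenMajorant n α μ ‖z - y‖ ≤
        A * greenMajorant n α μ ‖x - y‖ := by
  obtain ⟨A, hA, h⟩ := hV
  set g := greenMajorant n α μ
  have hg : Measurable g := measurable_greenMajorant n α μ
  have := hVm.enorm
  refine ⟨2 ^ (n + 2 * α) * (A + A), mul_ne_top (rpow_ne_top_of_nonneg (by positivity) (by simp))
    (by simp [hA]), fun x y => ?_⟩
  calc ∫⁻ z, g ‖x - z‖ * ‖V z‖ₑ * g ‖z - y‖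
      ≤ ∫⁻ z, 2 ^ (n + 2 * α) * g ‖x - y‖ * (g ‖x - z‖ * ‖V z‖ₑ + g ‖y - z‖ * ‖V z‖ₑ) := by
        refine lintegral_mono fun z => ?_
        rw [mul_right_comm, ← add_mul, ← mul_assoc, norm_sub_rev y z]
        gcongr ?_ * _
        exact greenMajorant_mul_greenMajorant_le (d := n) (by positivity) μ
          (norm_sub_le_norm_sub_add_norm_sub x z y)
    _ = 2 ^ (n + 2 * α) * g ‖x - y‖ *
          ((∫⁻ z, g ‖x - z‖ * ‖V z‖ₑ) + ∫⁻ z, g ‖y - z‖ * ‖V z‖ₑ) := by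
        rw [lintegral_const_mul _ (by fun_prop), lintegral_add_left (by fun_prop)]
    _ ≤ 2 ^ (n + 2 * α) * g ‖x - y‖ * (A + A) := by
        gcongr
        exacts [h x, h y]
    _ = 2 ^ (n + 2 * α) * (A + A) * g ‖x - y‖ := mul_right_comm ..

theorem lintegral_absLaplace_duhamelDensity_le (hα : 0 ≤ α) (μ : ℝ)
    {f : ℝ → EuclideanSpace ℝ (Fin n) → ℂ} (hf : StronglyMeasurable (Function.uncurry f))
    (y : EuclideanSpace ℝ (Fin n)) :
    ∫⁻ z, absLaplace μ (duhamelDensity n α V f · y z) ≤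
      ∫⁻ z, absLaplace μ (f · z) * ‖V z‖ₑ * absLaplace μ (K0 n α · (z - y)) := by
  refine lintegral_mono fun z => ?_
  have hfz : StronglyMeasurable (f · z) :=
    hf.comp_measurable (g := fun t : ℝ => (t, z)) (by fun_prop)
  have hK : StronglyMeasurable (K0 n α · (z - y)) :=
    (stronglyMeasurable_K0 n hα).comp_measurable (g := fun t : ℝ => (t, z - y)) (by fun_prop)
  rw [mul_right_comm, ← setLIntegral_exp_mul_setLIntegral_Ioo_sub_mul hfz hK,
    ← lintegral_mul_const' _ _ enorm_ne_top]
  refine lintegral_mono fun t => ?_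
  rw [mul_assoc, ← lintegral_mul_const' _ _ enorm_ne_top]
  gcongr
  refine (enorm_integral_le_lintegral_enorm _).trans_eq (lintegral_congr fun s => ?_)
  rw [enorm_mul, enorm_mul, mul_right_comm, enorm_eq_nnnorm (V z : ℂ), Complex.nnnorm_real,
    ← enorm_eq_nnnorm]

theorem HasBoundedGreenPotential.exists_lintegral_absLaplace_duhamelDensity_le (hα : 0 < α)
    (hV : HasBoundedGreenPotential n α μ V) (hVm : Measurable V) : ∃ A : ℝ≥0∞, A ≠ ⊤ ∧
      ∀ (f : ℝ → EuclideanSpace ℝ (Fin n) → ℂ) (C : ℝ≥0∞) (x : EuclideanSpace ℝ (Fin n)),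
        StronglyMeasurable (Function.uncurry f) →
        (∀ z, absLaplace μ (f · z) ≤ C * greenMajorant n α μ ‖x - z‖) →
        ∀ y, ∫⁻ z, absLaplace μ (duhamelDensity n α V f · y z) ≤
          C * (A * greenMajorant n α μ ‖x - y‖) := by
  obtain ⟨A, hA, h⟩ := hV.exists_lintegral_mul_le hα hVm
  obtain ⟨C₀, hC₀, h₀⟩ := exists_absLaplace_K0_le n hα μ
  have hg := measurable_greenMajorant n α μ
  refine ⟨C₀ * A, mul_ne_top hC₀ hA, fun f C x hf hfC y => ?_⟩
  calc ∫⁻ z, absLaplace μ (duhamelDensity n α V f · y z)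
      ≤ ∫⁻ z, absLaplace μ (f · z) * ‖V z‖ₑ * absLaplace μ (K0 n α · (z - y)) :=
        lintegral_absLaplace_duhamelDensity_le hα.le μ hf y
    _ ≤ ∫⁻ z, (C * greenMajorant n α μ ‖x - z‖) * ‖V z‖ₑ *
          (C₀ * greenMajorant n α μ ‖z - y‖) := by
        gcongr with z
        exacts [hfC z, h₀ _]
    _ = C * C₀ * ∫⁻ z, greenMajorant n α μ ‖x - z‖ * ‖V z‖ₑ * greenMajorant n α μ ‖z - y‖ := by
        rw [← lintegral_const_mul _ (by have := hVm.enorm; fun_prop)]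
        refine lintegral_congr fun z => ?_
        ring
    _ ≤ C * C₀ * (A * greenMajorant n α μ ‖x - y‖) := by
        gcongr
        exact h x y
    _ = C * (C₀ * A * greenMajorant n α μ ‖x - y‖) := by ring

theorem integrable_exp_mul_duhamelDensity (hα : 0 ≤ α) (hVm : Measurable V)
    {f : ℝ → EuclideanSpace ℝ (Fin n) → ℂ} (hf : StronglyMeasurable (Function.uncurry f))
    {y : EuclideanSpace ℝ (Fin n)}
    (h : ∫⁻ z, absLaplace μ (duhamelDensity n α V f · y z) ≠ ⊤) :
    Integrable (Function.uncurry fun (t : ℝ) z =>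
        (Real.exp (-μ * t) : ℂ) * duhamelDensity n α V f t y z)
      ((volume.restrict (Set.Ioi 0)).prod volume) := by
  have hm : StronglyMeasurable (Function.uncurry fun (t : ℝ) z =>
      (Real.exp (-μ * t) : ℂ) * duhamelDensity n α V f t y z) :=
    (show Measurable fun p : ℝ × EuclideanSpace ℝ (Fin n) =>
      (Real.exp (-μ * p.1) : ℂ) by fun_prop).stronglyMeasurable.mul
    ((stronglyMeasurable_duhamelDensity hα hVm hf).comp_measurable
      (g := fun p : ℝ × EuclideanSpace ℝ (Fin n) => ((p.1, y), p.2)) (by fun_prop))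
  refine ⟨hm.aestronglyMeasurable, ?_⟩
  rw [hasFiniteIntegral_iff_enorm, lintegral_prod_symm _ hm.enorm.aemeasurable]
  simp only [Function.uncurry_apply_pair, enorm_exp_mul]
  exact h.lt_top

theorem HasBoundedGreenPotential.exists_absLaplace_Kiter_le (hα : 0 < α)
    (hV : HasBoundedGreenPotential n α μ V) (hVm : Measurable V) (j : ℕ) :
    ∃ C : ℝ≥0∞, C ≠ ⊤ ∧
      ∀ x y, absLaplace μ (Kiter n α V j · x y) ≤ C * greenMajorant n α μ ‖x - y‖ := by
  induction j with
  | zero =>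
    obtain ⟨C, hC, h⟩ := exists_absLaplace_K0_le n hα μ
    exact ⟨C, hC, fun x y => h (x - y)⟩
  | succ j ih =>
    obtain ⟨C, hC, h⟩ := ih
    obtain ⟨A, hA, hdens⟩ := hV.exists_lintegral_absLaplace_duhamelDensity_le hα hVm
    refine ⟨C * A, mul_ne_top hC hA, fun x y => ?_⟩
    have hK := stronglyMeasurable_Kiter hα.le hVm j x
    calc absLaplace μ (Kiter n α V (j + 1) · x y)
        ≤ ∫⁻ t in Set.Ioi 0, ∫⁻ z, ENNReal.ofReal (Real.exp (-μ * t)) *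
            ‖duhamelDensity n α V (Kiter n α V j · x ·) t y z‖ₑ := by
          refine lintegral_mono fun t => ?_
          rw [lintegral_const_mul' _ _ ofReal_ne_top]
          gcongr
          exact enorm_integral_le_lintegral_enorm _
      _ = ∫⁻ z, absLaplace μ (duhamelDensity n α V (Kiter n α V j · x ·) · y z) := by
          refine lintegral_lintegral_swap (Measurable.aemeasurable ?_)
          have hm := ((stronglyMeasurable_duhamelDensity hα.le hVm hK).comp_measurable
            (g := fun p : ℝ × EuclideanSpace ℝ (Fin n) => ((p.1, y), p.2)) (by fun_prop)).enorm
          exact Measurable.mul (by fun_prop) hm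
      _ ≤ C * A * greenMajorant n α μ ‖x - y‖ := by
          rw [mul_assoc]
          exact hdens _ C x hK (h x) y

theorem HasBoundedGreenPotential.integrableOn_exp_mul_Kiter (hα : 0 < α)
    (hV : HasBoundedGreenPotential n α μ V) (hVm : Measurable V) (hμ : 0 < μ) (j : ℕ)
    {x y : EuclideanSpace ℝ (Fin n)} (hxy : x ≠ y) :
    IntegrableOn (fun t : ℝ => (Real.exp (-μ * t) : ℂ) * Kiter n α V j t x y) (Set.Ioi 0) := by
  obtain ⟨C, hC, h⟩ := hV.exists_absLaplace_Kiter_le hα hVm j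
  exact integrableOn_exp_mul_of_absLaplace_ne_top
    ((stronglyMeasurable_Kiter hα.le hVm j x).comp_measurable (g := fun t : ℝ => (t, y))
      (by fun_prop))
    (ne_top_of_le_ne_top (mul_ne_top hC (greenMajorant_ne_top n α hμ
      (norm_pos_iff.2 (sub_ne_zero.2 hxy)))) (h x y))

theorem integrableOn_exp_mul_K0 (hα : 0 < α) (hμ : 0 < μ) {x : EuclideanSpace ℝ (Fin n)}
    (hx : x ≠ 0) :
    IntegrableOn (fun t : ℝ => (Real.exp (-μ * t) : ℂ) * K0 n α t x) (Set.Ioi 0) := by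
  obtain ⟨C, hC, h⟩ := exists_absLaplace_K0_le n hα μ
  exact integrableOn_exp_mul_of_absLaplace_ne_top
    ((stronglyMeasurable_K0 n hα.le).comp_measurable (g := fun t : ℝ => (t, x)) (by fun_prop))
    (ne_top_of_le_ne_top (mul_ne_top hC (greenMajorant_ne_top n α hμ (norm_pos_iff.2 hx))) (h x))

theorem HasBoundedGreenPotential.integral_exp_mul_Kiter (hα : 0 < α)
    (hV : HasBoundedGreenPotential n α μ V) (hVm : Measurable V) (hμ : 0 < μ) (j : ℕ)
    {x y : EuclideanSpace ℝ (Fin n)} (hxy : x ≠ y) :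
    ∫ t in Set.Ioi (0 : ℝ), (Real.exp (-μ * t) : ℂ) * Kiter n α V j t x y =
      Riter n α V j μ x y := by
  induction j generalizing y with
  | zero => rfl
  | succ j ih =>
    have hn : Nontrivial (EuclideanSpace ℝ (Fin n)) := ⟨x, y, hxy⟩
    have hK := stronglyMeasurable_Kiter hα.le hVm j x
    obtain ⟨C, hC, hKC⟩ := hV.exists_absLaplace_Kiter_le hα hVm j
    obtain ⟨A, hA, hdens⟩ := hV.exists_lintegral_absLaplace_duhamelDensity_le hα hVm
    have hfin : C * (A * greenMajorant n α μ ‖x - y‖) ≠ ⊤ := mul_ne_top hC (mul_ne_top hA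
      (greenMajorant_ne_top n α hμ (norm_pos_iff.2 (sub_ne_zero.2 hxy))))
    have hint := integrable_exp_mul_duhamelDensity hα.le hVm hK
      (ne_top_of_le_ne_top hfin (hdens _ C x hK (hKC x) y))
    calc ∫ t in Set.Ioi (0 : ℝ), (Real.exp (-μ * t) : ℂ) * Kiter n α V (j + 1) t x y
        = ∫ t in Set.Ioi (0 : ℝ), ∫ z, (Real.exp (-μ * t) : ℂ) *
            duhamelDensity n α V (Kiter n α V j · x ·) t y z := by
          simp only [Kiter_succ, integral_const_mul]
      _ = ∫ z, ∫ t in Set.Ioi (0 : ℝ), (Real.exp (-μ * t) : ℂ) *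
            duhamelDensity n α V (Kiter n α V j · x ·) t y z := integral_integral_swap hint
      _ = Riter n α V (j + 1) μ x y := by
          refine integral_congr_ae ?_
          filter_upwards [Measure.ae_ne volume x, Measure.ae_ne volume y] with z hzx hzy
          have hKz := (hV.integrableOn_exp_mul_Kiter hα hVm hμ j hzx.symm).mul_const (V z : ℂ)
          simp only [mul_assoc _ _ (V z : ℂ)] at hKz
          rw [← ih hzx.symm, R0, ← integral_mul_const]
          simp only [mul_assoc _ _ (V z : ℂ)]
          exact setIntegral_exp_mul_setIntegral_Ioo_sub_mul hKz
            (integrableOn_exp_mul_K0 hα hμ (sub_ne_zero.2 hzy))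

end DuhamelIterates

section ComplexLaplaceTransform

theorem ae_restrict_comp_ofReal_ne_zero {F : ℂ → ℂ} {U : Set ℂ} (hF : DifferentiableOn ℂ F U)
    (hU : IsOpen U) (hUc : IsPreconnected U) (hne : ∃ z ∈ U, F z ≠ 0) {s : Set ℝ}
    (hs : MeasurableSet s) (hsU : Set.MapsTo ((↑) : ℝ → ℂ) s U) :
    ∀ᵐ t : ℝ ∂volume.restrict s, F t ≠ 0 := by
  obtain ⟨z, hz, hFz⟩ := hne
  rcases (hF.analyticOnNhd hU).eqOn_zero_or_eventually_ne_zero_of_preconnected hUc with h | h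
  · exact absurd (h hz) hFz
  refine ae_restrict_le_codiscreteWithin hs ?_
  rw [mem_codiscreteWithin_iff_forall_mem_nhdsNE]
  intro t ht
  have hofReal : Tendsto ((↑) : ℝ → ℂ) (nhdsWithin t {t}ᶜ) (nhdsWithin (t : ℂ) {(t : ℂ)}ᶜ) :=
    Complex.continuous_ofReal.continuousWithinAt.tendsto_nhdsWithin fun s hst => by simpa using hst
  filter_upwards [hofReal (mem_codiscreteWithin_iff_forall_mem_nhdsNE.1 h t (hsU ht))] with r hr
  exact hr.imp id fun hrU hrs => hrU (hsU hrs)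

/-- The Laplace transform of `f` on the half-line, as a function of a complex variable. -/
noncomputable def laplace (f : ℝ → ℂ) (s : ℂ) : ℂ :=
  ∫ t in Set.Ioi (0 : ℝ), Complex.exp (-s * t) * f t

theorem laplace_ofReal (f : ℝ → ℂ) (μ : ℝ) :
    laplace f μ = ∫ t in Set.Ioi (0 : ℝ), (Real.exp (-μ * t) : ℂ) * f t := by
  simp only [laplace, Complex.ofReal_exp, Complex.ofReal_mul, Complex.ofReal_neg]

variable {f : ℝ → ℂ}

theorem integrableOn_cexp_mul {s : ℂ}
    (hf : IntegrableOn (fun t : ℝ => (Real.exp (-s.re * t) : ℂ) * f t) (Set.Ioi 0)) :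
    IntegrableOn (fun t : ℝ => Complex.exp (-s * t) * f t) (Set.Ioi 0) := by
  have hosc := hf.bdd_mul (f := fun t : ℝ => Complex.exp ((-s.im * t : ℝ) * Complex.I))
    (c := 1) (Continuous.aestronglyMeasurable (by fun_prop))
    (Eventually.of_forall fun t => (Complex.norm_exp_ofReal_mul_I _).le)
  refine hosc.congr (Eventually.of_forall fun t => ?_)
  simp only
  rw [Complex.ofReal_exp, ← mul_assoc, ← Complex.exp_add]
  congr 2
  apply Complex.ext <;> simp

theorem differentiableOn_laplace
    (hf : ∀ μ > 0, IntegrableOn (fun t : ℝ => (Real.exp (-μ * t) : ℂ) * f t) (Set.Ioi 0)) :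
    DifferentiableOn ℂ (laplace f) {s : ℂ | 0 < s.re} := by
  refine differentiableOn_integral_of_locally_dominated
    (isOpen_lt continuous_const Complex.continuous_re)
    (fun s hs => (integrableOn_cexp_mul (hf s.re hs)).aestronglyMeasurable)
    (Eventually.of_forall fun t => by fun_prop) fun s₀ hs₀ => ?_
  have hs₀' : 0 < s₀.re / 2 := half_pos hs₀
  refine ⟨s₀.re / 2, hs₀', _, (hf _ hs₀').norm, ?_⟩
  filter_upwards [ae_restrict_mem measurableSet_Ioi] with t ht s hs
  have hre : |s.re - s₀.re| < s₀.re / 2 :=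
    (Complex.sub_re s s₀ ▸ Complex.abs_re_le_norm (s - s₀)).trans_lt
      (by rwa [Metric.mem_ball, dist_eq_norm] at hs)
  rw [norm_mul, norm_mul, Complex.norm_exp, Complex.re_mul_ofReal, Complex.neg_re,
    Complex.norm_real, Real.norm_of_nonneg (Real.exp_nonneg _)]
  have ht₀ : 0 ≤ t := le_of_lt ht
  gcongr
  linarith [(abs_lt.1 hre).1]

-- On a vertical line the Laplace transform is the Fourier transform of `t ↦ exp (-μ t) f t`.
theorem eq_zero_of_laplace_eq_zero_on_line {μ : ℝ}
    (hf : IntegrableOn (fun t : ℝ => (Real.exp (-μ * t) : ℂ) * f t) (Set.Ioi 0))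
    (hzero : ∀ τ : ℝ, laplace f (μ + τ * Complex.I) = 0) {t : ℝ} (ht : 0 < t)
    (hft : ContinuousAt f t) : f t = 0 := by
  set g : ℝ → ℂ := (Set.Ioi 0).indicator fun t => (Real.exp (-μ * t) : ℂ) * f t with hg_def
  have hg : Integrable g := hf.integrable_indicator measurableSet_Ioi
  have hFg : FourierTransform.fourier g = 0 := by
    ext u
    rw [Real.fourier_real_eq_integral_exp_smul, Pi.zero_apply, ← hzero (2 * π * u), laplace,
      ← integral_indicator measurableSet_Ioi]
    congr with r
    simp only [hg_def, Set.indicator_apply, smul_eq_mul, mul_ite, mul_zero, ← mul_assoc,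
      Complex.ofReal_exp, ← Complex.exp_add]
    congr 3
    push_cast
    ring
  have hgt : g =ᶠ[nhds t] fun t => (Real.exp (-μ * t) : ℂ) * f t := by
    filter_upwards [Ioi_mem_nhds ht] with r hr using Set.indicator_of_mem hr _
  have hgc : ContinuousAt g t :=
    (ContinuousAt.mul (by fun_prop) hft).congr hgt.symm
  have hinv := hg.fourierInv_fourier_eq (by rw [hFg]; exact integrable_zero _ _ _) hgc
  have hgt₀ : (Real.exp (-μ * t) : ℂ) * f t = 0 := by
    rw [← hgt.eq_of_nhds, ← hinv, hFg, Real.fourierInv_eq]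
    simp
  exact (mul_eq_zero.1 hgt₀).resolve_left (Complex.ofReal_ne_zero.2 (Real.exp_ne_zero _))

theorem ae_laplace_ofReal_ne_zero
    (hf : ∀ μ > 0, IntegrableOn (fun t : ℝ => (Real.exp (-μ * t) : ℂ) * f t) (Set.Ioi 0))
    {t : ℝ} (ht : 0 < t) (hft : ContinuousAt f t) (hne : f t ≠ 0) :
    ∀ᵐ μ : ℝ ∂volume.restrict (Set.Ioi 0), laplace f μ ≠ 0 := by
  refine ae_restrict_comp_ofReal_ne_zero (differentiableOn_laplace hf)
    (isOpen_lt continuous_const Complex.continuous_re) (convex_halfSpace_re_gt 0).isPreconnected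
    ?_ measurableSet_Ioi fun μ hμ => by simpa using hμ
  by_contra! hzero
  exact hne (eq_zero_of_laplace_eq_zero_on_line (hf 1 one_pos)
    (fun τ => hzero _ (by simp)) ht hft)

theorem measurable_laplace_ofReal {X : Type*} [MeasurableSpace X] {F : X → ℝ → ℂ}
    (hF : StronglyMeasurable (Function.uncurry F)) :
    Measurable fun p : X × ℝ => laplace (F p.1) p.2 := by
  have hF' := hF.comp_measurable (g := fun q : (X × ℝ) × ℝ => (q.1.1, q.2)) (by fun_prop)
  have hexp : Measurable fun q : (X × ℝ) × ℝ => Complex.exp (-(q.1.2 : ℂ) * q.2) := by fun_prop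
  exact (hexp.stronglyMeasurable.mul hF').integral_prod_right.measurable

end ComplexLaplaceTransform

section HeatKernelNonvanishing

open scoped FourierTransform

variable {E : Type*} [NormedAddCommGroup E] [InnerProductSpace ℝ E] [FiniteDimensional ℝ E]
  [MeasurableSpace E] [BorelSpace E] {α : ℝ}

theorem heatKernel_smul {r : ℝ} (hr : 0 < r) (t : ℂ) (x : E) :
    heatKernel α ((r ^ (2 * α) : ℝ) * t) (r • x) =
      (r ^ Module.finrank ℝ E)⁻¹ • heatKernel α t x := by
  have hsymbol (ξ : E) : heatSymbol α t (r • ξ) = heatSymbol α ((r ^ (2 * α) : ℝ) * t) ξ := by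
    rw [heatSymbol, heatSymbol, norm_smul, Real.norm_of_nonneg hr.le,
      Real.mul_rpow hr.le (norm_nonneg _)]
    push_cast
    ring_nf
  have hscale := Measure.integral_comp_smul (volume : Measure E) (fun ξ : E => Complex.exp
    ((2 * π * inner ℝ ξ ((2 * π)⁻¹ • x) : ℝ) * Complex.I) • heatSymbol α t ξ) r
  simp only [abs_of_pos (show 0 < (r ^ Module.finrank ℝ E)⁻¹ by positivity), hsymbol,
    real_inner_smul_left, ← real_inner_smul_right, smul_comm r] at hscale
  simp only [heatKernel, Real.fourierInv_eq', ← real_inner_smul_right, smul_comm (r ^ _)⁻¹, hscale]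

theorem heatKernel_zero_ne_zero (hα : 0 < α) {t : ℝ} (ht : 0 < t) :
    heatKernel α t (0 : E) ≠ 0 := by
  have hreal (ξ : E) : heatSymbol α t ξ = (Real.exp (-t * ‖ξ‖ ^ (2 * α)) : ℂ) := by
    rw [heatSymbol]
    push_cast
    rfl
  rw [heatKernel, smul_zero, Real.fourierInv_eq']
  simp only [inner_zero_right, mul_zero, Complex.ofReal_zero, zero_mul, Complex.exp_zero, one_smul,
    hreal, integral_complex_ofReal]
  exact smul_ne_zero (by positivity) (Complex.ofReal_ne_zero.2 (integral_exp_pos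
    (integrable_exp_neg_mul_norm_rpow volume (by positivity) ht)).ne')

theorem exists_heatKernel_ne_zero (hα : 0 < α) (x : E) :
    ∃ t : ℝ, 0 < t ∧ heatKernel α t x ≠ 0 := by
  have hcont : Continuous fun r : ℝ => heatKernel α ((1 : ℝ) : ℂ) (r • x) :=
    (continuous_heatKernel hα (by simp)).comp (by fun_prop)
  have hnear : ∀ᶠ r : ℝ in nhds 0, heatKernel α ((1 : ℝ) : ℂ) (r • x) ≠ 0 :=
    hcont.continuousAt.eventually_ne (by simpa using heatKernel_zero_ne_zero (E := E) hα one_pos)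
  obtain ⟨r, hr, hr₀⟩ :=
    ((hnear.filter_mono nhdsWithin_le_nhds).and (self_mem_nhdsWithin (s := Set.Ioi 0))).exists
  have hr₀' : 0 < r := hr₀
  refine ⟨r ^ (-(2 * α)), by positivity, fun h => hr ?_⟩
  have hscale := heatKernel_smul (α := α) hr₀' ((r ^ (-(2 * α)) : ℝ) : ℂ) x
  rwa [← Complex.ofReal_mul, ← Real.rpow_add hr₀', add_neg_cancel, Real.rpow_zero, h, smul_zero]
    at hscale

theorem continuousAt_heatKernel_ofReal (hα : 0 < α) {t : ℝ} (ht : 0 < t) (x : E) :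
    ContinuousAt (fun t : ℝ => heatKernel α t x) t :=
  ((differentiableOn_heatKernel hα x).continuousOn.continuousAt
    ((isOpen_lt continuous_const Complex.continuous_re).mem_nhds (by simpa using ht))).comp'
    Complex.continuous_ofReal.continuousAt

end HeatKernelNonvanishing

section ResolventNonvanishing

variable {n : ℕ} {α μ : ℝ}

theorem R0_eq_laplace (x y : EuclideanSpace ℝ (Fin n)) :
    R0 n α μ x y = laplace (K0 n α · (x - y)) μ :=
  (laplace_ofReal _ _).symm

theorem ae_laplace_K0_ne_zero_of_ne_zero (hα : 0 < α) {x : EuclideanSpace ℝ (Fin n)} (hx : x ≠ 0) :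
    ∀ᵐ μ : ℝ ∂volume.restrict (Set.Ioi 0), laplace (K0 n α · x) μ ≠ 0 := by
  obtain ⟨t, ht, hne⟩ := exists_heatKernel_ne_zero hα x
  refine ae_laplace_ofReal_ne_zero (fun μ hμ => integrableOn_exp_mul_K0 hα hμ hx) ht ?_
    (by rwa [K0_eq_heatKernel])
  simpa only [K0_eq_heatKernel] using continuousAt_heatKernel_ofReal hα ht x

theorem measurable_laplace_K0 (n : ℕ) (hα : 0 ≤ α) :
    Measurable fun p : EuclideanSpace ℝ (Fin n) × ℝ => laplace (K0 n α · p.1) p.2 :=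
  measurable_laplace_ofReal (F := fun x t => K0 n α t x)
    ((stronglyMeasurable_K0 n hα).comp_measurable
      (g := fun p : EuclideanSpace ℝ (Fin n) × ℝ => (p.2, p.1)) measurable_swap)

theorem laplace_K0_smul {r : ℝ} (hr : 0 < r) (x : EuclideanSpace ℝ (Fin n)) :
    laplace (K0 n α · (r • x)) μ =
      (r ^ (2 * α) * (r ^ n)⁻¹) • laplace (K0 n α · x) ((r ^ (2 * α) * μ : ℝ) : ℂ) := by
  have hK (t : ℝ) : K0 n α (r ^ (2 * α) * t) (r • x) = (r ^ n)⁻¹ • K0 n α t x := by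
    have h := heatKernel_smul (α := α) hr (t : ℂ) x
    rwa [← Complex.ofReal_mul, ← K0_eq_heatKernel, ← K0_eq_heatKernel,
      finrank_euclideanSpace_fin] at h
  have hsub := integral_comp_mul_left_Ioi' (fun t : ℝ =>
    Complex.exp (-(μ : ℂ) * t) * K0 n α t (r • x)) 0 (b := r ^ (2 * α)) (by positivity)
  rw [mul_zero] at hsub
  rw [laplace, laplace, ← hsub, mul_smul]
  congr 1
  rw [← integral_smul]
  congr 1
  ext t
  rw [hK, mul_smul_comm]
  push_cast
  ring_nf

-- By scaling, the resolvent kernels at any two spectral parameters vanish on null sets together.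
theorem ae_laplace_K0_ne_zero [NeZero n] (hα : 0 < α) (hμ : 0 < μ) :
    ∀ᵐ x : EuclideanSpace ℝ (Fin n), laplace (K0 n α · x) μ ≠ 0 := by
  have hae : ∀ᵐ ν : ℝ ∂volume.restrict (Set.Ioi 0), ∀ᵐ x : EuclideanSpace ℝ (Fin n),
      laplace (K0 n α · x) ν ≠ 0 := by
    refine (Measure.ae_ae_comm (p := fun x (ν : ℝ) => laplace (K0 n α · x) ν ≠ 0)
      (measurable_laplace_K0 n hα.le (measurableSet_singleton 0).compl)).1 ?_
    filter_upwards [Measure.ae_ne volume 0] with x hx using ae_laplace_K0_ne_zero_of_ne_zero hα hx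
  obtain ⟨ν, hν₀ : 0 < ν, hν⟩ := Measure.exists_mem_of_measure_ne_zero_of_ae (by simp) hae
  set r := (ν / μ) ^ (2 * α)⁻¹
  have hr : 0 < r := by positivity
  have hrν : r ^ (2 * α) * μ = ν := by
    rw [Real.rpow_inv_rpow (by positivity) (by positivity), div_mul_cancel₀ _ hμ.ne']
  have hsmul : ∀ᵐ x : EuclideanSpace ℝ (Fin n), laplace (K0 n α · (r • x)) μ ≠ 0 := by
    filter_upwards [hν] with x hx
    rw [laplace_K0_smul hr, hrν]
    exact smul_ne_zero (by positivity) hx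
  filter_upwards [(Measure.quasiMeasurePreserving_smul volume (inv_ne_zero hr.ne')).ae hsmul]
    with x hx
  rwa [smul_inv_smul₀ hr.ne'] at hx

end ResolventNonvanishing

section HeatConvolution

/-- The sector `|t| < 2 Re t` of complex times, on which the spatial decay of the heat kernel is
uniform. -/
def timeSector : Set ℂ := {t | ‖t‖ < 2 * t.re}

theorem isOpen_timeSector : IsOpen timeSector :=
  isOpen_lt continuous_norm (continuous_const.mul Complex.continuous_re)

theorem convex_timeSector : Convex ℝ timeSector := by
  have h := ((convexOn_univ_norm (E := ℂ)).sub
    (((2 : ℝ) • Complex.reLm).concaveOn convex_univ)).convex_lt 0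
  simpa [timeSector] using h

theorem re_pos_of_mem_timeSector {t : ℂ} (ht : t ∈ timeSector) : 0 < t.re := by
  have : ‖t‖ < 2 * t.re := ht
  linarith [norm_nonneg t]

theorem ofReal_mem_timeSector {t : ℝ} (ht : 0 < t) : (t : ℂ) ∈ timeSector := by
  simp [timeSector, abs_of_pos ht, ht]

variable {E : Type*} [NormedAddCommGroup E] [InnerProductSpace ℝ E] [FiniteDimensional ℝ E]
  [MeasurableSpace E] [BorelSpace E] {α : ℝ}

theorem exists_norm_heatKernel_mul_ofReal_le (hα : 0 < α) : ∃ C : ℝ, 0 ≤ C ∧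
    ∀ t ∈ timeSector, ∀ c : ℝ, 0 < c → c ≤ 1 → ∀ x : E, x ≠ 0 →
      ‖heatKernel α (t * c) x‖ ≤ C * (‖t‖ * ‖x‖ ^ (-(Module.finrank ℝ E + 2 * α))) := by
  obtain ⟨C, hC, h⟩ := exists_norm_heatKernel_le_of_ne_zero (E := E) hα
  refine ⟨C, hC, fun t ht c hc hc₁ x hx => ?_⟩
  have hre : (t * c).re = t.re * c := Complex.re_mul_ofReal t c
  have hnorm : ‖t * c‖ = ‖t‖ * c := by rw [norm_mul, Complex.norm_real, Real.norm_of_nonneg hc.le]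
  have hle : ‖t‖ ≤ 2 * t.re := le_of_lt ht
  refine (h (t * c) (hre ▸ mul_pos (re_pos_of_mem_timeSector ht) hc) ?_ x hx).trans ?_
  · rw [hre, hnorm, ← mul_assoc]
    gcongr
  · rw [hnorm]
    gcongr
    exact mul_le_of_le_one_right (norm_nonneg t) hc₁

/-- The time convolution `∫₀ᵗ K₀(t-s,a) K₀(s,b) ds` at complex time `t`, the path of integration
being the segment `s = θt`. -/
noncomputable def heatConvolution (α : ℝ) (a b : E) (t : ℂ) : ℂ :=
  ∫ θ in Set.Ioo (0 : ℝ) 1, t * (heatKernel α (t * (1 - θ : ℝ)) a * heatKernel α (t * θ) b)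

theorem heatConvolution_ofReal (a b : E) {t : ℝ} (ht : 0 < t) :
    heatConvolution α a b t =
      ∫ s in Set.Ioo 0 t, heatKernel α (t - s : ℝ) a * heatKernel α s b := by
  have h := intervalIntegral.smul_integral_comp_mul_left (a := 0) (b := 1)
    (fun s : ℝ => heatKernel α (t - s : ℝ) a * heatKernel α s b) t
  rw [mul_zero, mul_one, Complex.real_smul, ← intervalIntegral.integral_const_mul,
    intervalIntegral.integral_of_le zero_le_one, intervalIntegral.integral_of_le ht.le,
    integral_Ioc_eq_integral_Ioo, integral_Ioc_eq_integral_Ioo] at h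
  simpa only [heatConvolution, ← Complex.ofReal_mul, mul_one_sub] using h

theorem differentiableOn_heatConvolution (hα : 0 < α) {a b : E} (ha : a ≠ 0) (hb : b ≠ 0) :
    DifferentiableOn ℂ (heatConvolution α a b) timeSector := by
  obtain ⟨C, hC, hbound⟩ := exists_norm_heatKernel_mul_ofReal_le (E := E) hα
  have hK := stronglyMeasurable_heatKernel (E := E) hα.le
  have hdiff (c : ℝ) (hc : 0 < c) (x : E) :
      DifferentiableOn ℂ (fun t : ℂ => heatKernel α (t * c) x) timeSector :=
    (differentiableOn_heatKernel hα x).fun_comp (by fun_prop) fun t ht => by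
      simpa [hc] using re_pos_of_mem_timeSector ht
  refine differentiableOn_integral_of_locally_dominated isOpen_timeSector (fun t _ => ?_) ?_ ?_
  · exact (((hK.comp_measurable (g := fun θ : ℝ => (t * (1 - θ : ℝ), a)) (by fun_prop)).mul
      (hK.comp_measurable (g := fun θ : ℝ => (t * θ, b)) (by fun_prop))).const_mul
        t).aestronglyMeasurable
  · filter_upwards [ae_restrict_mem measurableSet_Ioo] with θ hθ
    exact differentiableOn_id.mul ((hdiff (1 - θ) (sub_pos.2 hθ.2) a).mul (hdiff θ hθ.1 b))
  · intro t₀ ht₀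
    obtain ⟨R, hR, hball⟩ := Metric.isOpen_iff.1 isOpen_timeSector t₀ ht₀
    set M : ℝ := ‖t₀‖ + R
    set w : E → ℝ := fun x => C * (M * ‖x‖ ^ (-(Module.finrank ℝ E + 2 * α)))
    have hw (t : ℂ) (ht : t ∈ Metric.ball t₀ R) (c : ℝ) (hc : 0 < c) (hc₁ : c ≤ 1) (x : E)
        (hx : x ≠ 0) : ‖heatKernel α (t * c) x‖ ≤ w x := by
      refine (hbound t (hball ht) c hc hc₁ x hx).trans (mul_le_mul_of_nonneg_left ?_ hC)
      gcongr
      exact (norm_lt_of_mem_ball ht).le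
    refine ⟨R, hR, fun _ => M * (w a * w b), integrable_const _, ?_⟩
    filter_upwards [ae_restrict_mem measurableSet_Ioo] with θ hθ t ht
    rw [norm_mul, norm_mul]
    gcongr
    · exact (norm_lt_of_mem_ball ht).le
    · exact hw t ht _ (sub_pos.2 hθ.2) (by linarith [hθ.1]) a ha
    · exact hw t ht θ hθ.1 hθ.2.le b hb

end HeatConvolution

section DuhamelNonvanishing

variable {n : ℕ} {α : ℝ}

theorem setIntegral_K0_mul_K0_eq_heatConvolution (a b : EuclideanSpace ℝ (Fin n)) {t : ℝ}
    (ht : 0 < t) :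
    ∫ s in Set.Ioo 0 t, K0 n α (t - s) a * K0 n α s b = heatConvolution α a b t := by
  simp only [heatConvolution_ofReal a b ht, K0_eq_heatKernel]

theorem exists_heatConvolution_ne_zero (hα : 0 < α) {a b : EuclideanSpace ℝ (Fin n)} (ha : a ≠ 0)
    (hb : b ≠ 0) : ∃ t : ℝ, 0 < t ∧ heatConvolution α a b t ≠ 0 := by
  by_contra! hzero
  obtain ⟨ν, hν : 0 < ν, hνa, hνb⟩ := Measure.exists_mem_of_measure_ne_zero_of_ae (by simp)
    ((ae_laplace_K0_ne_zero_of_ne_zero hα ha).and (ae_laplace_K0_ne_zero_of_ne_zero hα hb))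
  refine mul_ne_zero hνa hνb ?_
  rw [laplace_ofReal, laplace_ofReal, ← setIntegral_exp_mul_setIntegral_Ioo_sub_mul
    (integrableOn_exp_mul_K0 hα hν ha) (integrableOn_exp_mul_K0 hα hν hb)]
  refine setIntegral_eq_zero_of_forall_eq_zero fun t ht => ?_
  rw [setIntegral_K0_mul_K0_eq_heatConvolution a b ht, hzero t ht, mul_zero]

theorem ae_setIntegral_K0_mul_K0_ne_zero (hα : 0 < α) {a b : EuclideanSpace ℝ (Fin n)}
    (ha : a ≠ 0) (hb : b ≠ 0) :
    ∀ᵐ t ∂volume.restrict (Set.Ioi 0), ∫ s in Set.Ioo 0 t, K0 n α (t - s) a * K0 n α s b ≠ 0 := by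
  obtain ⟨t₁, ht₁, hne⟩ := exists_heatConvolution_ne_zero hα ha hb
  filter_upwards [ae_restrict_comp_ofReal_ne_zero (differentiableOn_heatConvolution hα ha hb)
    isOpen_timeSector convex_timeSector.isPreconnected ⟨t₁, ofReal_mem_timeSector ht₁, hne⟩
    measurableSet_Ioi fun t ht => ofReal_mem_timeSector ht, ae_restrict_mem measurableSet_Ioi]
    with t h ht
  rwa [setIntegral_K0_mul_K0_eq_heatConvolution a b ht]

theorem ae_duhamelDensity_one_ne_zero [NeZero n] (hα : 0 < α) (x y : EuclideanSpace ℝ (Fin n)) :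
    ∀ᵐ t ∂volume.restrict (Set.Ioi 0), ∀ᵐ z,
      duhamelDensity n α 1 (fun t z => K0 n α t (x - z)) t y z ≠ 0 := by
  have hmeas := (stronglyMeasurable_duhamelDensity hα.le measurable_one
    (stronglyMeasurable_Kiter hα.le (V := 1) measurable_one 0 x)).comp_measurable
    (g := fun p : EuclideanSpace ℝ (Fin n) × ℝ => ((p.2, y), p.1)) (by fun_prop)
  refine (Measure.ae_ae_comm (p := fun z t =>
    duhamelDensity n α 1 (fun t z => K0 n α t (x - z)) t y z ≠ 0)
    (hmeas.measurable (measurableSet_singleton 0).compl)).1 ?_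
  filter_upwards [Measure.ae_ne volume x, Measure.ae_ne volume y] with z hx hy
  simpa [duhamelDensity] using
    ae_setIntegral_K0_mul_K0_ne_zero hα (sub_ne_zero.2 hx.symm) (sub_ne_zero.2 hy)

end DuhamelNonvanishing

section NonMeasurablePotential

theorem integral_mul_ofReal_eq_zero_of_not_aemeasurable {X : Type*} [MeasurableSpace X]
    {ν : Measure X} {V : X → ℝ} (hV : ¬AEMeasurable V ν) {h : X → ℂ} (hm : AEMeasurable h ν)
    (hne : ∀ᵐ z ∂ν, h z ≠ 0) : ∫ z, h z * V z ∂ν = 0 := by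
  refine integral_non_aestronglyMeasurable fun hhV => hV ?_
  refine (Complex.measurable_re.comp_aemeasurable (hhV.aemeasurable.div hm)).congr ?_
  filter_upwards [hne] with z hz
  simp [hz]

variable {n : ℕ} {α : ℝ} {V : EuclideanSpace ℝ (Fin n) → ℝ}

theorem duhamelDensity_eq_mul (f : ℝ → EuclideanSpace ℝ (Fin n) → ℂ) (t : ℝ)
    (y z : EuclideanSpace ℝ (Fin n)) :
    duhamelDensity n α V f t y z = duhamelDensity n α 1 f t y z * V z := by
  rw [duhamelDensity, duhamelDensity, ← integral_mul_const]
  congr 1 with s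
  simp only [Pi.one_apply, Complex.ofReal_one]
  ring

theorem ae_Kiter_one_eq_zero_of_not_aemeasurable [NeZero n] (hα : 0 < α) (hV : ¬AEMeasurable V)
    (x y : EuclideanSpace ℝ (Fin n)) :
    ∀ᵐ t ∂volume.restrict (Set.Ioi 0), Kiter n α V 1 t x y = 0 := by
  filter_upwards [ae_duhamelDensity_one_ne_zero hα x y] with t ht
  have hmeas := (stronglyMeasurable_duhamelDensity hα.le measurable_one
    (stronglyMeasurable_Kiter hα.le (V := 1) measurable_one 0 x)).comp_measurable
    (g := fun z : EuclideanSpace ℝ (Fin n) => ((t, y), z)) (by fun_prop)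
  rw [Kiter_succ]
  simp only [duhamelDensity_eq_mul (V := V)]
  exact integral_mul_ofReal_eq_zero_of_not_aemeasurable hV hmeas.measurable.aemeasurable ht

theorem ae_Kiter_succ_eq_zero_of_not_aemeasurable [NeZero n] (hα : 0 < α) (hV : ¬AEMeasurable V)
    (j : ℕ) (x y : EuclideanSpace ℝ (Fin n)) :
    ∀ᵐ t ∂volume.restrict (Set.Ioi 0), Kiter n α V (j + 1) t x y = 0 := by
  induction j generalizing y with
  | zero => exact ae_Kiter_one_eq_zero_of_not_aemeasurable hα hV x y
  | succ j ih =>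
    refine .of_forall fun t => ?_
    suffices h : ∀ z, duhamelDensity n α V (Kiter n α V (j + 1) · x ·) t y z = 0 by
      simp only [Kiter_succ (j + 1), h, integral_zero]
    refine fun z => integral_eq_zero_of_ae ?_
    have hz := (Measure.measurePreserving_sub_left volume t).quasiMeasurePreserving.ae
      ((ae_restrict_iff' measurableSet_Ioi).1 (ih z))
    filter_upwards [ae_restrict_of_ae hz, ae_restrict_mem measurableSet_Ioo] with s hs hst
    simp [hs (sub_pos.2 hst.2)]

theorem Riter_one_eq_zero_of_not_aemeasurable [NeZero n] (hα : 0 < α) (hV : ¬AEMeasurable V)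
    {μ : ℝ} (hμ : 0 < μ) (x y : EuclideanSpace ℝ (Fin n)) : Riter n α V 1 μ x y = 0 := by
  have hm (g : EuclideanSpace ℝ (Fin n) → EuclideanSpace ℝ (Fin n)) (hg : Measurable g) :
      Measurable fun z => laplace (K0 n α · (g z)) μ :=
    (measurable_laplace_K0 n hα.le).comp (hg.prodMk measurable_const)
  have hx := (Measure.measurePreserving_sub_left volume x).quasiMeasurePreserving.ae
    (ae_laplace_K0_ne_zero hα hμ)
  have hy := (measurePreserving_sub_right volume y).quasiMeasurePreserving.ae
    (ae_laplace_K0_ne_zero hα hμ)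
  simp only [Riter, R0_eq_laplace, mul_right_comm _ ((V _ : ℝ) : ℂ)]
  refine integral_mul_ofReal_eq_zero_of_not_aemeasurable hV
    ((hm _ (measurable_const_sub x)).mul (hm _ (measurable_sub_const y))).aemeasurable ?_
  filter_upwards [hx, hy] with z hxz hzy using mul_ne_zero hxz hzy

theorem Riter_succ_eq_zero_of_not_aemeasurable [NeZero n] (hα : 0 < α) (hV : ¬AEMeasurable V)
    {μ : ℝ} (hμ : 0 < μ) (j : ℕ) (x y : EuclideanSpace ℝ (Fin n)) :
    Riter n α V (j + 1) μ x y = 0 := by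
  induction j generalizing y with
  | zero => exact Riter_one_eq_zero_of_not_aemeasurable hα hV hμ x y
  | succ j ih => rw [Riter]; simp [ih]

theorem laplace_Kiter_eq_Riter_of_not_aemeasurable [NeZero n] (hα : 0 < α)
    (hV : ¬AEMeasurable V) {μ : ℝ} (hμ : 0 < μ) (j : ℕ) {x y : EuclideanSpace ℝ (Fin n)}
    (hxy : x ≠ y) :
    IntegrableOn (fun t : ℝ => (Real.exp (-μ * t) : ℂ) * Kiter n α V j t x y) (Set.Ioi 0) ∧
      ∫ t in Set.Ioi (0 : ℝ), (Real.exp (-μ * t) : ℂ) * Kiter n α V j t x y =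
        Riter n α V j μ x y := by
  cases j with
  | zero => exact ⟨integrableOn_exp_mul_K0 hα hμ (sub_ne_zero.2 hxy), rfl⟩
  | succ j =>
    have hzero : (fun t : ℝ => (Real.exp (-μ * t) : ℂ) * Kiter n α V (j + 1) t x y)
        =ᵐ[volume.restrict (Set.Ioi 0)] 0 := by
      filter_upwards [ae_Kiter_succ_eq_zero_of_not_aemeasurable hα hV j x y] with t ht
      simp [ht]
    exact ⟨(integrable_zero _ _ _).congr hzero.symm, (integral_eq_zero_of_ae hzero).trans
      (Riter_succ_eq_zero_of_not_aemeasurable hα hV hμ j x y).symm⟩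

end NonMeasurablePotential

section AEMeasurablePotential

variable {n : ℕ} {α : ℝ} {V W : EuclideanSpace ℝ (Fin n) → ℝ}

theorem Kiter_congr_ae (hVW : V =ᵐ[volume] W) (j : ℕ) : Kiter n α V j = Kiter n α W j := by
  induction j with
  | zero => rfl
  | succ j ih =>
    ext t x y
    simp only [Kiter, ih]
    refine integral_congr_ae ?_
    filter_upwards [hVW] with z hz
    rw [hz]

theorem Riter_congr_ae (hVW : V =ᵐ[volume] W) (j : ℕ) : Riter n α V j = Riter n α W j := by
  induction j with
  | zero => rfl
  | succ j ih =>
    ext μ x y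
    simp only [Riter, ih]
    refine integral_congr_ae ?_
    filter_upwards [hVW] with z hz
    rw [hz]

theorem HasBoundedGreenPotential.laplace_Kiter_eq_Riter {μ : ℝ} (hα : 0 < α)
    (hV : HasBoundedGreenPotential n α μ V) (hVm : AEMeasurable V) (hμ : 0 < μ) (j : ℕ)
    {x y : EuclideanSpace ℝ (Fin n)} (hxy : x ≠ y) :
    IntegrableOn (fun t : ℝ => (Real.exp (-μ * t) : ℂ) * Kiter n α V j t x y) (Set.Ioi 0) ∧
      ∫ t in Set.Ioi (0 : ℝ), (Real.exp (-μ * t) : ℂ) * Kiter n α V j t x y =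
        Riter n α V j μ x y := by
  rw [Kiter_congr_ae hVm.ae_eq_mk, Riter_congr_ae hVm.ae_eq_mk]
  have hmk := hV.congr_ae hVm.ae_eq_mk
  exact ⟨hmk.integrableOn_exp_mul_Kiter hα hVm.measurable_mk hμ j hxy,
    hmk.integral_exp_mul_Kiter hα hVm.measurable_mk hμ j hxy⟩

end AEMeasurablePotential

theorem laplace_transform_duhamel_eq_resolvent_general {n : ℕ} {α : ℝ} (hα : 0 < α)
    {V : EuclideanSpace ℝ (Fin n) → ℝ} (hV : katoClass n α V) (j : ℕ) {μ : ℝ} (hμ : 0 < μ)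
    {x y : EuclideanSpace ℝ (Fin n)} (hxy : x ≠ y) :
    IntegrableOn (fun t : ℝ => (Real.exp (-μ * t) : ℂ) * Kiter n α V j t x y) (Set.Ioi 0) ∧
      ∫ t in Set.Ioi (0 : ℝ), (Real.exp (-μ * t) : ℂ) * Kiter n α V j t x y =
        Riter n α V j μ x y := by
  have : NeZero n := ⟨by rintro rfl; exact hxy (Subsingleton.elim x y)⟩
  by_cases hVm : AEMeasurable V
  · exact (hV.hasBoundedGreenPotential hα hVm hμ).laplace_Kiter_eq_Riter hα hVm hμ j hxy
  · exact laplace_Kiter_eq_Riter_of_not_aemeasurable hα hVm hμ j hxy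

/-- for non-integer `α > 0` and `V ∈ K_{2α}(ℝⁿ)`, for every `j ≥ 0`, `μ > 0` and
`x ≠ y`, the Laplace transform of the `j`-th Duhamel iterate is absolutely convergent and equals
the `j`-th iterated resolvent kernel: `∫₀^∞ e^{-μ t} K_j(t,x,y) dt = R_j(μ,x,y)`. -/
theorem laplace_transform_duhamel_eq_resolvent (n : ℕ) (hn : 1 ≤ n) (α : ℝ) (hα : 0 < α)
    (hαnotint : ∀ k : ℕ, α ≠ k) (V : EuclideanSpace ℝ (Fin n) → ℝ) (hV : katoClass n α V) :
    ∀ j : ℕ, ∀ μ : ℝ, 0 < μ → ∀ x y : EuclideanSpace ℝ (Fin n), x ≠ y →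
      IntegrableOn (fun t : ℝ => (Real.exp (-μ * t) : ℂ) * Kiter n α V j t x y)
          (Set.Ioi (0 : ℝ)) ∧
        ∫ t in Set.Ioi (0 : ℝ), (Real.exp (-μ * t) : ℂ) * Kiter n α V j t x y =
          Riter n α V j μ x y := by
  intro j μ hμ x y hxy
  exact laplace_transform_duhamel_eq_resolvent_general hα hV j hμ hxy
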